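/- arXiv:1306.4141 — 6 statements merged into one kernel-verified Lean document; each statement's English description precedes it below -/
import Mathlib

section
/- Let n ≥ 1 and let α = (α_1, …, α_p) and β = (β_1, …, β_q) be partitions of n with p and q parts respectively, and suppose p + q ≥ n + 1. Then there exist coprime monic polynomials P, Q ∈ ℂ[X] with factorization patterns α and β respectively such that P − Q is a nonzero constant. -/
open Polynomial

/-!
When `p + q = n + 1` we argue by induction on `n`. Up to exchanging `α` and `β`, some part `α i₀`
equals `1` and some part `β j₀` is at least `2`. Solve the problem for the patterns with `α i₀`
removed and `β j₀` decreased by one, translate so that `b j₀ = 0`, and multiply by `X`: this gives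
`P - Q = X` with the patterns `α` and `β`. The derivative of `P - Q` with respect to the roots is
injective on variations fixing `b j₀`, so the implicit function theorem moves `b j₀` to a
transcendental number while keeping `P - Q = X`. Hence some valuation of `ℂ`, trivial on `ℚ`, is
larger than `1` at some root.

Let `l` be the largest root. At the scale of `l` the term `X` is infinitesimal compared with `P`,
so that `P = Q` in the limit. Counting multiplicities with a Wronskian, as in the Mason-Stothers
theorem, `p + q = n + 1` forces all the roots to be infinitely close to `l` compared with `l`. Near
them `X` is in effect the constant `l`, and the same count shows that they lie within distance
`l ^ (1 / n)` of `l`. Rescaling by `l ^ (1 / n)` around `l` therefore turns `P - Q = X` into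
`P - Q = 1` over the residue field, from where the Nullstellensatz brings it back to `ℂ`.
Distinctness of the roots follows from the Mason-Stothers theorem.

When `p + q > n + 1`, merge parts of `α` until `p + q = n + 1`, solve, and split the merged roots
by the same implicit function argument.
-/

section RootProd

variable {R S ι : Type*} [CommRing R] [CommRing S]

/-- The monic polynomial whose roots are the `a i` for `i ∈ s`, the exponents `α i` of coincident
roots being added up. -/
noncomputable def rootProd (s : Finset ι) (α : ι → ℕ) (a : ι → R) : R[X] :=
  ∏ i ∈ s, (X - C (a i)) ^ α i

variable (s : Finset ι) (α : ι → ℕ) (a : ι → R)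

lemma monic_rootProd : (rootProd s α a).Monic :=
  monic_prod_of_monic _ _ fun i _ => (monic_X_sub_C (a i)).pow (α i)

lemma map_rootProd (f : R →+* S) : (rootProd s α a).map f = rootProd s α (f ∘ a) := by
  simp [rootProd, Polynomial.map_prod]

lemma eval_rootProd (z : R) : (rootProd s α a).eval z = ∏ i ∈ s, (z - a i) ^ α i := by
  simp [rootProd, eval_prod]

lemma natDegree_rootProd [Nontrivial R] : (rootProd s α a).natDegree = ∑ i ∈ s, α i := by
  rw [rootProd, natDegree_prod_of_monic _ _ fun i _ => (monic_X_sub_C (a i)).pow (α i)]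
  exact Finset.sum_congr rfl fun i _ => by simp [(monic_X_sub_C (a i)).natDegree_pow]

variable {s} in
lemma rootProd_dvd_rootProd {α α' : ι → ℕ} (h : ∀ i ∈ s, α i ≤ α' i) (a : ι → R) :
    rootProd s α a ∣ rootProd s α' a :=
  Finset.prod_dvd_prod_of_dvd _ _ fun i hi => pow_dvd_pow _ (h i hi)

lemma rootProd_pred_dvd : rootProd s (fun i => α i - 1) a ∣ rootProd s α a :=
  rootProd_dvd_rootProd (fun _ _ => Nat.sub_le _ _) a

lemma rootProd_pred_dvd_derivative :
    rootProd s (fun i => α i - 1) a ∣ derivative (rootProd s α a) := by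
  classical
  rw [rootProd, rootProd, derivative_prod_finset]
  refine Finset.dvd_sum fun i hi => ?_
  rw [← Finset.prod_erase_mul _ _ hi, derivative_X_sub_C_pow]
  exact mul_dvd_mul (rootProd_pred_dvd _ α a) (dvd_mul_left _ _)

lemma isRoot_rootProd_iff [IsDomain R] {α : ι → ℕ} (hα : ∀ i, 0 < α i) {r : R} :
    (rootProd s α a).IsRoot r ↔ ∃ i ∈ s, a i = r := by
  simp [IsRoot, eval_rootProd, Finset.prod_eq_zero_iff, (hα _).ne', sub_eq_zero, eq_comm (a := r)]

lemma rootMultiplicity_rootProd [IsDomain R] [DecidableEq R] (r : R) :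
    (rootProd s α a).rootMultiplicity r = ∑ i ∈ s with a i = r, α i := by
  rw [← count_roots, rootProd, roots_prod _ _ (monic_rootProd s α a).ne_zero,
    Multiset.count_bind, Finset.sum_filter]
  refine Finset.sum_congr rfl fun i _ => ?_
  simp [Multiset.count_singleton, eq_comm]

variable {K : Type*} [Field K]

lemma X_sub_C_comp_affine_eq_C_mul_X_sub_C (c y : K) {d : K} (hd : d ≠ 0) :
    (X - C c).comp (C y + C d * X) = C d * (X - C ((c - y) / d)) := by
  rw [mul_sub, ← C_mul, mul_div_cancel₀ _ hd, C_sub, sub_comp, X_comp, C_comp]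
  ring

lemma X_sub_C_comp_affine_eq_C_mul_one_sub {c y : K} (d : K) (hcy : c - y ≠ 0) :
    (X - C c).comp (C y + C d * X) = C (y - c) * (1 - C (d / (c - y)) * X) := by
  have hslope : (y - c) * (d / (c - y)) = -d := by
    rw [← neg_sub c y, neg_mul, mul_div_cancel₀ _ hcy]
  rw [mul_sub, ← mul_assoc, ← C_mul, hslope, C_sub, C_neg, sub_comp, X_comp, C_comp]
  ring

lemma rootProd_comp_affine (a : ι → K) (y : K) {d : K} (hd : d ≠ 0) :
    (rootProd s α a).comp (C y + C d * X) =
      C (d ^ ∑ i ∈ s, α i) * rootProd s α fun i => (a i - y) / d := by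
  rw [rootProd, rootProd, prod_comp, ← Finset.prod_pow_eq_pow_sum, map_prod,
    ← Finset.prod_mul_distrib]
  refine Finset.prod_congr rfl fun i _ => ?_
  rw [pow_comp, X_sub_C_comp_affine_eq_C_mul_X_sub_C _ _ hd, mul_pow, C_pow]

end RootProd

lemma sum_pred_add_card {ι : Type*} (s : Finset ι) {α : ι → ℕ} (hα : ∀ i, 0 < α i) :
    ∑ i ∈ s, (α i - 1) + s.card = ∑ i ∈ s, α i := by
  rw [Finset.card_eq_sum_ones, ← Finset.sum_add_distrib]
  exact Finset.sum_congr rfl fun i _ => Nat.sub_add_cancel (hα i)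

section DegenerateLimit

variable {k ι κ : Type*} [Field k]

lemma X_sub_C_mul_derivative_pow {R : Type*} [CommRing R] (r : R) (m : ℕ) :
    (X - C r) * derivative ((X - C r) ^ m) = C (m : R) * (X - C r) ^ m := by
  cases m with
  | zero => simp
  | succ m => rw [derivative_X_sub_C_pow, Nat.add_sub_cancel]; ring

lemma not_X_sub_C_pow_dvd_wronskian [CharZero k] {U A : k[X]} (hU : U ≠ 0) (hA : A ≠ 0) {r : k}
    (hne : U.rootMultiplicity r ≠ A.rootMultiplicity r) :
    ¬ (X - C r) ^ (U.rootMultiplicity r + A.rootMultiplicity r) ∣ wronskian U A := by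
  obtain ⟨U₁, hU₁, hU₁r⟩ := exists_eq_pow_rootMultiplicity_mul_and_not_dvd U hU r
  obtain ⟨A₁, hA₁, hA₁r⟩ := exists_eq_pow_rootMultiplicity_mul_and_not_dvd A hA r
  set u := U.rootMultiplicity r
  set m := A.rootMultiplicity r
  have hwronskian : (X - C r) * wronskian U A = (X - C r) ^ (u + m) *
      (C ((m : k) - u) * (U₁ * A₁) + (X - C r) * wronskian U₁ A₁) := by
    simp only [wronskian, hU₁, hA₁, derivative_mul, C_sub, pow_add]
    linear_combination
      (U₁ * A₁ * (X - C r) ^ u) * X_sub_C_mul_derivative_pow r m -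
      (U₁ * A₁ * (X - C r) ^ m) * X_sub_C_mul_derivative_pow r u
  intro hdvd
  have hdvd' := mul_dvd_mul_left (X - C r) hdvd
  rw [hwronskian, mul_comm (X - C r),
    mul_dvd_mul_iff_left (pow_ne_zero _ (X_sub_C_ne_zero r)), dvd_iff_isRoot] at hdvd'
  rw [dvd_iff_isRoot, IsRoot] at hU₁r hA₁r
  have hmu : (m : k) - u ≠ 0 := sub_ne_zero.2 (Nat.cast_injective.ne hne.symm)
  simp [hU₁r, hA₁r, hmu] at hdvd'

/-- What remains, over the residue field, of an identity `rootProd α a - rootProd β b = τ U` with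
`τ` infinitesimal: the two products agree, and differentiating the identity before passing to the
limit shows that the repeated factors of both divide a Wronskian. -/
structure IsDegenerateLimit (U : k[X]) (s : Finset ι) (t : Finset κ) (α : ι → ℕ) (β : κ → ℕ)
    (x : ι → k) (z : κ → k) : Prop where
  rootProd_eq : rootProd s α x = rootProd t β z
  dvd_wronskian : rootProd s (fun i => α i - 1) x * rootProd t (fun j => β j - 1) z ∣
    wronskian U (rootProd s α x)

namespace IsDegenerateLimit

variable [DecidableEq k] {U : k[X]} {s : Finset ι} {t : Finset κ} {α : ι → ℕ}
  {β : κ → ℕ} {x : ι → k} {z : κ → k}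

lemma sum_fiber_eq (h : IsDegenerateLimit U s t α β x z) (r : k) :
    ∑ i ∈ s with x i = r, α i = ∑ j ∈ t with z j = r, β j := by
  rw [← rootMultiplicity_rootProd, h.rootProd_eq, rootMultiplicity_rootProd]

lemma mem_image_of_mem_right (h : IsDegenerateLimit U s t α β x z) (hα : ∀ i, 0 < α i)
    (hβ : ∀ j, 0 < β j) {j : κ} (hj : j ∈ t) : z j ∈ s.image x := by
  rw [Finset.mem_image, ← isRoot_rootProd_iff s x hα, h.rootProd_eq, isRoot_rootProd_iff t z hβ]
  exact ⟨j, hj, rfl⟩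

lemma apply_elim_mem_image {K : Type*} {f : K → k} {a : ι → K} {b : κ → K}
    (h : IsDegenerateLimit U s t α β (f ∘ a) (f ∘ b)) (hα : ∀ i, 0 < α i)
    (hβ : ∀ j, 0 < β j) {m : ι ⊕ κ} (hm : m ∈ s.disjSum t) :
    f (Sum.elim a b m) ∈ s.image (f ∘ a) := by
  rcases m with i | j
  · exact Finset.mem_image_of_mem (f ∘ a) (Finset.inl_mem_disjSum.1 hm)
  · exact h.mem_image_of_mem_right hα hβ (Finset.inr_mem_disjSum.1 hm)

lemma sum_fiber_add_one_le [CharZero k] (h : IsDegenerateLimit U s t α β x z) (hU : U ≠ 0)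
    (hα : ∀ i, 0 < α i) (hβ : ∀ j, 0 < β j) {r : k} (hr : r ∈ s.image x) :
    ∑ i ∈ s with x i = r, α i + 1 ≤
      (s.filter (x · = r)).card + (t.filter (z · = r)).card + U.rootMultiplicity r := by
  have hfiber : 1 ≤ (s.filter (x · = r)).card :=
    Finset.card_pos.2 (Finset.fiber_nonempty_iff_mem_image.2 hr)
  by_cases hum : U.rootMultiplicity r = (rootProd s α x).rootMultiplicity r
  · rw [hum, rootMultiplicity_rootProd]
    omega
  by_contra hlt
  refine not_X_sub_C_pow_dvd_wronskian hU (monic_rootProd s α x).ne_zero hum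
    (dvd_trans ?_ h.dvd_wronskian)
  have hs := sum_pred_add_card (s.filter (x · = r)) hα
  have ht := sum_pred_add_card (t.filter (z · = r)) hβ
  rw [← h.sum_fiber_eq] at ht
  rw [← le_rootMultiplicity_iff ((monic_rootProd _ _ _).mul (monic_rootProd _ _ _)).ne_zero,
    rootMultiplicity_mul ((monic_rootProd _ _ _).mul (monic_rootProd _ _ _)).ne_zero,
    rootMultiplicity_rootProd, rootMultiplicity_rootProd, rootMultiplicity_rootProd]
  omega

lemma sum_add_card_le [CharZero k] (h : IsDegenerateLimit U s t α β x z) (hU : U.Separable)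
    (hα : ∀ i, 0 < α i) (hβ : ∀ j, 0 < β j) {T : Finset k} (hT : T ⊆ s.image x)
    (hTU : ∀ r ∈ T, U.eval r ≠ 0) :
    ∑ i ∈ s, α i + T.card ≤ s.card + t.card := by
  have hx : ∀ i ∈ s, x i ∈ s.image x := fun i hi => Finset.mem_image_of_mem x hi
  have hz : ∀ j ∈ t, z j ∈ s.image x := fun j hj =>
    h.mem_image_of_mem_right hα hβ hj
  rw [← Finset.sum_fiberwise_of_maps_to hx α, Finset.card_eq_sum_card_fiberwise hx,
    Finset.card_eq_sum_card_fiberwise hz, ← Finset.inter_eq_right.2 hT, Finset.card_eq_sum_ones,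
    ← Finset.sum_ite_mem, ← Finset.sum_add_distrib, ← Finset.sum_add_distrib]
  refine Finset.sum_le_sum fun r hr => ?_
  have hfiber := h.sum_fiber_add_one_le hU.ne_zero hα hβ hr
  split_ifs with hrT
  · rwa [rootMultiplicity_eq_zero (hTU r hrT)] at hfiber
  · have := rootMultiplicity_le_one_of_separable hU r
    omega

end IsDegenerateLimit

end DegenerateLimit

section Zoom

lemma monic_dvd_of_dvd_C_mul {R : Type*} [CommRing R] [IsDomain R] {M N : R[X]} (hM : M.Monic)
    {c : R} (hc : c ≠ 0) (h : M ∣ C c * N) : M ∣ N := by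
  rw [← modByMonic_eq_zero_iff_dvd hM] at h ⊢
  rw [← smul_eq_C_mul, smul_modByMonic] at h
  exact (smul_eq_zero.1 h).resolve_left hc

lemma mul_dvd_wronskian_of_sub_eq {R : Type*} [CommRing R] [IsDomain R] {F G U M N : R[X]}
    {c e : R} (hM : M.Monic) (hN : N.Monic) (hMF : M ∣ F) (hMF' : M ∣ derivative F) (hNG : N ∣ G)
    (hNG' : N ∣ derivative G) (he : e ≠ 0) (h : F - C c * G = C e * U) :
    M * N ∣ wronskian U F := by
  refine monic_dvd_of_dvd_C_mul (hM.mul hN) he ?_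
  have h' := congrArg derivative h
  rw [derivative_sub, derivative_C_mul, derivative_C_mul] at h'
  have hwronskian : C e * wronskian U F = C c * wronskian F G := by
    simp only [wronskian]
    linear_combination (-derivative F) * h + F * h'
  rw [hwronskian]
  exact (dvd_sub (mul_dvd_mul hMF hNG') (mul_dvd_mul hMF' hNG)).mul_left _

open IsLocalRing in
lemma IsDegenerateLimit.of_residue {A ι κ : Type*} [CommRing A] [IsDomain A] [IsLocalRing A]
    {s : Finset ι} {t : Finset κ} {α : ι → ℕ} {β : κ → ℕ} {x : ι → A} {z : κ → A} {G H U : A[X]}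
    {c e : A} (hG : G.map (residue A) = 1) (hH : H.map (residue A) = 1)
    (he : e ∈ maximalIdeal A) (he₀ : e ≠ 0)
    (h : rootProd s α x * G - C c * (rootProd t β z * H) = C e * U) :
    IsDegenerateLimit (U.map (residue A)) s t α β (residue A ∘ x) (residue A ∘ z) where
  rootProd_eq := by
    have hres := congrArg (Polynomial.map (residue A)) h
    simp only [Polynomial.map_sub, Polynomial.map_mul, hG, hH, map_rootProd, Polynomial.map_C,
      (residue_eq_zero_iff e).2 he, mul_one, map_zero, zero_mul, sub_eq_zero] at hres
    have hlead := congrArg leadingCoeff hres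
    rw [leadingCoeff_mul, leadingCoeff_C, (monic_rootProd _ _ _).leadingCoeff,
      (monic_rootProd _ _ _).leadingCoeff, mul_one] at hlead
    rw [hres, ← hlead, C_1, one_mul]
  dvd_wronskian := by
    have hdvd := mul_dvd_wronskian_of_sub_eq (monic_rootProd s (fun i => α i - 1) x)
      (monic_rootProd t (fun j => β j - 1) z) ((rootProd_pred_dvd s α x).mul_right G)
      (by
        rw [derivative_mul]
        exact dvd_add ((rootProd_pred_dvd_derivative s α x).mul_right _)
          ((rootProd_pred_dvd s α x).mul_right _))
      ((rootProd_pred_dvd t β z).mul_right H)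
      (by
        rw [derivative_mul]
        exact dvd_add ((rootProd_pred_dvd_derivative t β z).mul_right _)
          ((rootProd_pred_dvd t β z).mul_right _)) he₀ h
    have hdvd_res := Polynomial.map_dvd (residue A) hdvd
    rwa [wronskian, Polynomial.map_mul, map_rootProd, map_rootProd, Polynomial.map_sub,
      Polynomial.map_mul, Polynomial.map_mul, ← derivative_map, ← derivative_map,
      Polynomial.map_mul, hG, mul_one, map_rootProd] at hdvd_res

variable {K ι κ : Type*} [Field K] (O : ValuationSubring K)

/-- The element of the valuation ring `O` represented by `c`, with junk value `0` for `c ∉ O`. -/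
noncomputable def integralPart (c : K) : O :=
  open Classical in if h : c ∈ O then ⟨c, h⟩ else 0

lemma coe_integralPart {c : K} (hc : c ∈ O) : (integralPart O c : K) = c := by
  simp [integralPart, hc]

/-- The reduction of `c` to the residue field of `O`, with junk value `0` for `c ∉ O`. -/
noncomputable def reduction (c : K) : IsLocalRing.ResidueField O :=
  IsLocalRing.residue O (integralPart O c)

variable {O}

lemma reduction_eq_reduction_iff {c c' : K} (hc : c ∈ O) (hc' : c' ∈ O) :
    reduction O c = reduction O c' ↔ O.valuation (c - c') < 1 := by
  rw [reduction, reduction, ← sub_eq_zero, ← map_sub, IsLocalRing.residue_eq_zero_iff,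
    O.valuation_lt_one_iff, AddSubgroupClass.coe_sub, coe_integralPart O hc, coe_integralPart O hc']

variable (O) in
@[simp] lemma reduction_zero : reduction O 0 = 0 := by
  rw [reduction, IsLocalRing.residue_eq_zero_iff, O.valuation_lt_one_iff,
    coe_integralPart O O.zero_mem, map_zero]
  exact zero_lt_one

variable (O) in
@[simp] lemma reduction_one : reduction O 1 = 1 := by
  have : integralPart O 1 = 1 := Subtype.ext (coe_integralPart O O.one_mem)
  rw [reduction, this, map_one]

lemma reduction_eq_zero_iff {c : K} (hc : c ∈ O) : reduction O c = 0 ↔ O.valuation c < 1 := by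
  rw [← reduction_zero, reduction_eq_reduction_iff hc O.zero_mem, sub_zero]

lemma div_mem_iff_valuation_le {c d : K} (hd : d ≠ 0) :
    c / d ∈ O ↔ O.valuation c ≤ O.valuation d := by
  rw [← O.valuation_le_one_iff, map_div₀, div_le_one₀ (zero_lt_iff.2 (by simpa using hd))]

lemma valuation_div_lt_one_iff {c d : K} (hd : d ≠ 0) :
    O.valuation (c / d) < 1 ↔ O.valuation c < O.valuation d := by
  rw [map_div₀, div_lt_one₀ (zero_lt_iff.2 (by simpa using hd))]

/-- The position of `c` within the disc `{y + d w | w ∈ O}`, up to infinitesimals relative to `d`;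
junk value `0` outside that disc. -/
noncomputable def reductionAt (O : ValuationSubring K) (y d c : K) : IsLocalRing.ResidueField O :=
  reduction O ((c - y) / d)

lemma reductionAt_eq_reductionAt_iff {y d c c' : K} (hd : d ≠ 0)
    (hc : O.valuation (c - y) ≤ O.valuation d) (hc' : O.valuation (c' - y) ≤ O.valuation d) :
    reductionAt O y d c = reductionAt O y d c' ↔ O.valuation (c - c') < O.valuation d := by
  rw [reductionAt, reductionAt, reduction_eq_reduction_iff ((div_mem_iff_valuation_le hd).2 hc)
    ((div_mem_iff_valuation_le hd).2 hc'), ← sub_div, sub_sub_sub_cancel_right,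
    valuation_div_lt_one_iff hd]

lemma reductionAt_center (y d : K) : reductionAt O y d y = 0 := by
  rw [reductionAt, sub_self, zero_div, reduction_zero]

lemma reductionAt_eq_one {y d c : K} (hd : d ≠ 0) (hc : c - y = d) : reductionAt O y d c = 1 := by
  rw [reductionAt, hc, div_self hd, reduction_one]

/-- The size of `rootProd α a` on the disc `{y + d w | w ∈ O}`: each factor contributes the larger
of `d` and the distance of its root from `y`. -/
noncomputable def zoomScale [Fintype ι] (O : ValuationSubring K) (α : ι → ℕ) (a : ι → K)
    (y d : K) : K :=
  open Classical in
    ∏ i, (if O.valuation (a i - y) ≤ O.valuation d then d else y - a i) ^ α i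

lemma valuation_zoomScale [Fintype ι] (α : ι → ℕ) (a : ι → K) (y d : K) :
    O.valuation (zoomScale O α a y d) =
      ∏ i, max (O.valuation d) (O.valuation (a i - y)) ^ α i := by
  rw [zoomScale, map_prod]
  refine Finset.prod_congr rfl fun i _ => ?_
  rw [map_pow]
  split_ifs with h
  · rw [max_eq_left h]
  · rw [max_eq_right (not_le.1 h).le, Valuation.map_sub_swap]

open Classical in
/-- The indices of the roots in the disc `{y + d w | w ∈ O}`. -/
noncomputable def nearRoots [Fintype ι] (O : ValuationSubring K) (a : ι → K) (y d : K) :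
    Finset ι :=
  {i | O.valuation (a i - y) ≤ O.valuation d}

lemma nearRoots_eq_univ [Fintype ι] {a : ι → K} {y d : K}
    (h : ∀ i, O.valuation (a i - y) ≤ O.valuation d) : nearRoots O a y d = Finset.univ :=
  Finset.filter_true_of_mem fun i _ => h i

lemma exists_rootProd_comp_eq [Fintype ι] (α : ι → ℕ) (a : ι → K) (y : K) {d : K} (hd : d ≠ 0) :
    ∃ G : O[X], G.map (IsLocalRing.residue O) = 1 ∧
      (rootProd Finset.univ α a).comp (C y + C d * X) = C (zoomScale O α a y d) *
        (rootProd (nearRoots O a y d) α (fun i => integralPart O ((a i - y) / d)) * G).map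
          O.subtype := by
  classical
  refine ⟨∏ i with ¬ O.valuation (a i - y) ≤ O.valuation d,
    (1 - C (integralPart O (d / (a i - y))) * X) ^ α i, ?_, ?_⟩
  · rw [Polynomial.map_prod]
    refine Finset.prod_eq_one fun i hi => ?_
    have hlt := not_le.1 (Finset.mem_filter.1 hi).2
    have hne : a i - y ≠ 0 := fun h => by simp [h] at hlt
    have hred : reduction O (d / (a i - y)) = 0 :=
      (reduction_eq_zero_iff ((div_mem_iff_valuation_le hne).2 hlt.le)).2
        ((valuation_div_lt_one_iff hne).2 hlt)
    rw [reduction] at hred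
    simp [hred]
  · rw [rootProd, rootProd, zoomScale, nearRoots, prod_comp, Polynomial.map_mul,
      Polynomial.map_prod, Polynomial.map_prod, Finset.prod_filter, Finset.prod_filter,
      map_prod, ← Finset.prod_mul_distrib, ← Finset.prod_mul_distrib]
    refine Finset.prod_congr rfl fun i _ => ?_
    split_ifs with hi
    · rw [pow_comp, X_sub_C_comp_affine_eq_C_mul_X_sub_C _ _ hd, mul_pow, C_pow]
      simp [coe_integralPart O ((div_mem_iff_valuation_le hd).2 hi)]
    · have hlt := not_le.1 hi
      have hne : a i - y ≠ 0 := fun h => by simp [h] at hlt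
      rw [pow_comp, X_sub_C_comp_affine_eq_C_mul_one_sub d hne, mul_pow, C_pow]
      simp [coe_integralPart O ((div_mem_iff_valuation_le hne).2 hlt.le)]

lemma valuation_le_of_C_mul_sub_eq {A B U : O[X]} {γ δ τ : K}
    (hB : B.map (IsLocalRing.residue O) ≠ 0) (hτγ : O.valuation τ < O.valuation γ)
    (h : C γ * A.map O.subtype - C δ * B.map O.subtype = C τ * U.map O.subtype) :
    O.valuation δ ≤ O.valuation γ := by
  by_contra! hlt
  have hδ : δ ≠ 0 := fun h => by simp [h] at hlt
  have hB' : B = C (integralPart O (γ / δ)) * A - C (integralPart O (τ / δ)) * U := by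
    apply Polynomial.map_injective O.subtype Subtype.val_injective
    refine mul_left_cancel₀ (C_ne_zero.2 hδ) ?_
    simp only [Polynomial.map_sub, Polynomial.map_mul, Polynomial.map_C,
      ValuationSubring.subtype_apply, coe_integralPart O ((div_mem_iff_valuation_le hδ).2 hlt.le),
      coe_integralPart O ((div_mem_iff_valuation_le hδ).2 (hτγ.trans hlt).le)]
    rw [mul_sub, ← mul_assoc, ← mul_assoc, ← C_mul, ← C_mul, mul_div_cancel₀ _ hδ,
      mul_div_cancel₀ _ hδ, ← h]
    ring
  have hzero {c : K} (hc : O.valuation c < O.valuation δ) : reduction O (c / δ) = 0 :=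
    (reduction_eq_zero_iff ((div_mem_iff_valuation_le hδ).2 hc.le)).2
      ((valuation_div_lt_one_iff hδ).2 hc)
  apply hB
  rw [hB', Polynomial.map_sub, Polynomial.map_mul, Polynomial.map_mul, Polynomial.map_C,
    Polynomial.map_C, ← reduction, ← reduction, hzero hlt, hzero (hτγ.trans hlt)]
  simp

theorem isDegenerateLimit_zoom [Fintype ι] [Fintype κ] {α : ι → ℕ} {β : κ → ℕ} {a : ι → K}
    {b : κ → K} {y d τ : K} {U : O[X]} (hd : d ≠ 0) (hτ : τ ≠ 0)
    (h : (rootProd Finset.univ α a - rootProd Finset.univ β b).comp (C y + C d * X) =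
      C τ * U.map O.subtype)
    (hlt : O.valuation τ < ∏ i, max (O.valuation d) (O.valuation (a i - y)) ^ α i) :
    IsDegenerateLimit (U.map (IsLocalRing.residue O)) (nearRoots O a y d) (nearRoots O b y d) α β
      (reductionAt O y d ∘ a) (reductionAt O y d ∘ b) := by
  obtain ⟨G, hG, hP⟩ := exists_rootProd_comp_eq (O := O) α a y hd
  obtain ⟨H, hH, hQ⟩ := exists_rootProd_comp_eq (O := O) β b y hd
  rw [← valuation_zoomScale] at hlt
  set γ := zoomScale O α a y d
  set δ := zoomScale O β b y d
  have hγ : γ ≠ 0 := fun h => by simp [h] at hlt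
  rw [sub_comp, hP, hQ] at h
  have hδγ : O.valuation δ ≤ O.valuation γ :=
    valuation_le_of_C_mul_sub_eq (by
      rw [Polynomial.map_mul, hH, mul_one, map_rootProd]
      exact (monic_rootProd _ _ _).ne_zero) hlt h
  have hδ : δ / γ ∈ O := (div_mem_iff_valuation_le hγ).2 hδγ
  have hτγ : τ / γ ∈ O := (div_mem_iff_valuation_le hγ).2 hlt.le
  refine IsDegenerateLimit.of_residue (c := ⟨δ / γ, hδ⟩) (e := ⟨τ / γ, hτγ⟩) hG hH
    ((O.valuation_lt_one_iff _).2 ((valuation_div_lt_one_iff hγ).2 hlt))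
    (fun he => div_ne_zero hτ hγ (congrArg Subtype.val he)) ?_
  apply Polynomial.map_injective O.subtype Subtype.val_injective
  refine mul_left_cancel₀ (C_ne_zero.2 hγ) ?_
  rw [Polynomial.map_sub, Polynomial.map_mul (p := C _), Polynomial.map_mul (p := C _),
    Polynomial.map_C, Polynomial.map_C, ValuationSubring.subtype_apply,
    ValuationSubring.subtype_apply, mul_sub, ← mul_assoc, ← mul_assoc, ← C_mul, ← C_mul,
    mul_div_cancel₀ _ hγ, mul_div_cancel₀ _ hγ, h]

end Zoom

/-- A pair of partitions `α`, `β` of `n` with `n + 1` parts altogether, the least number of parts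
for which `P - Q` can be constant. Such pairs are the vertex degrees of plane trees with `n` edges
and properly two-coloured vertices. -/
structure IsTreePassport {ι κ : Type*} [Fintype ι] [Fintype κ] (n : ℕ) (α : ι → ℕ) (β : κ → ℕ) :
    Prop where
  left_pos : ∀ i, 0 < α i
  right_pos : ∀ j, 0 < β j
  left_sum : ∑ i, α i = n
  right_sum : ∑ j, β j = n
  card_add_card : Fintype.card ι + Fintype.card κ = n + 1

lemma prod_max_pow_eq_pow_sum {M ι : Type*} [CommMonoid M] [LinearOrder M] [Fintype ι] (α : ι → ℕ)
    {f : ι → M} {c : M} (hf : ∀ i, f i ≤ c) : ∏ i, max c (f i) ^ α i = c ^ ∑ i, α i := by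
  rw [← Finset.prod_pow_eq_pow_sum]
  exact Finset.prod_congr rfl fun i _ => by rw [max_eq_left (hf i)]

section ResidueSolution

variable {K ι κ : Type*} [Field K] [Fintype ι] [Fintype κ] {O : ValuationSubring K}
  {n : ℕ} {α : ι → ℕ} {β : κ → ℕ} {a : ι → K} {b : κ → K} {l : K}

lemma exists_affine_eq_C_mul {y d : K} (hlt : O.valuation d < O.valuation y) :
    ∃ U : O[X], U.map (IsLocalRing.residue O) = 1 ∧ C y + C d * X = C y * U.map O.subtype := by
  have hy : y ≠ 0 := fun h => by simp [h] at hlt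
  have hmem : d / y ∈ O := (div_mem_iff_valuation_le hy).2 hlt.le
  have hred : reduction O (d / y) = 0 :=
    (reduction_eq_zero_iff hmem).2 ((valuation_div_lt_one_iff hy).2 hlt)
  refine ⟨1 + C (integralPart O (d / y)) * X, ?_, ?_⟩
  · rw [reduction] at hred
    simp [hred]
  · simp only [Polynomial.map_add, Polynomial.map_one, Polynomial.map_mul, Polynomial.map_C,
      Polynomial.map_X, ValuationSubring.subtype_apply, coe_integralPart O hmem]
    rw [mul_add, mul_one, ← mul_assoc, ← C_mul, mul_div_cancel₀ _ hy]

/-- A solution of `P - Q = X` over a field with a valuation, for which the largest root `l` is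
infinitely large while the common value `P(0) = Q(0)` is not infinitesimal. -/
structure IsDivergentSolution (O : ValuationSubring K) (n : ℕ) (α : ι → ℕ) (β : κ → ℕ) (a : ι → K)
    (b : κ → K) (l : K) : Prop extends IsTreePassport n α β where
  two_le : 2 ≤ n
  sub_eq_X : rootProd Finset.univ α a - rootProd Finset.univ β b = X
  one_le_eval_zero : 1 ≤ O.valuation ((rootProd Finset.univ α a).eval 0)
  one_lt : 1 < O.valuation l
  exists_eq : ∃ m, Sum.elim a b m = l
  valuation_le : ∀ m, O.valuation (Sum.elim a b m) ≤ O.valuation l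

namespace IsDivergentSolution

variable (h : IsDivergentSolution O n α β a b l)
include h

lemma ne_zero : l ≠ 0 := by
  rintro rfl
  simpa using h.one_lt

lemma elim_ne_zero (m : ι ⊕ κ) : Sum.elim a b m ≠ 0 := by
  have hP : (rootProd Finset.univ α a).eval 0 ≠ 0 := fun h₀ => by
    simpa [h₀] using h.one_le_eval_zero
  have hPQ : (rootProd Finset.univ α a).eval 0 = (rootProd Finset.univ β b).eval 0 := by
    simpa [sub_eq_zero] using congrArg (eval 0) h.sub_eq_X
  rcases m with i | j
  · exact fun hi => hP ((isRoot_rootProd_iff _ a h.left_pos).2 ⟨i, Finset.mem_univ i, hi⟩)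
  · exact fun hj => hP (hPQ.trans
      ((isRoot_rootProd_iff _ b h.right_pos).2 ⟨j, Finset.mem_univ j, hj⟩))

lemma isDegenerateLimit_zoom_zero {d : K} (hd : d ≠ 0)
    (hlt : O.valuation d < ∏ i, max (O.valuation d) (O.valuation (a i)) ^ α i) :
    IsDegenerateLimit X (nearRoots O a 0 d) (nearRoots O b 0 d) α β
      (reductionAt O 0 d ∘ a) (reductionAt O 0 d ∘ b) := by
  simpa using isDegenerateLimit_zoom (U := X) hd hd (by simp [h.sub_eq_X]) (by simpa using hlt)

lemma isDegenerateLimit_zoom_largest :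
    IsDegenerateLimit X Finset.univ Finset.univ α β
      (reductionAt O 0 l ∘ a) (reductionAt O 0 l ∘ b) := by
  have hscale := prod_max_pow_eq_pow_sum α fun i => h.valuation_le (.inl i)
  rw [h.left_sum] at hscale
  have hn := h.two_le
  have hlimit := h.isDegenerateLimit_zoom_zero h.ne_zero
    (hscale ▸ lt_self_pow₀ h.one_lt (by omega))
  rwa [nearRoots_eq_univ fun i => by simpa using h.valuation_le (.inl i),
    nearRoots_eq_univ fun j => by simpa using h.valuation_le (.inr j)] at hlimit

lemma one_mem_image_reductionAt [DecidableEq (IsLocalRing.ResidueField O)] :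
    1 ∈ Finset.univ.image (reductionAt O 0 l ∘ a) := by
  obtain ⟨m, hm⟩ := h.exists_eq
  rw [← reductionAt_eq_one (O := O) h.ne_zero (sub_zero _), ← hm]
  exact (hm ▸ h.isDegenerateLimit_zoom_largest).apply_elim_mem_image h.left_pos
    h.right_pos (by simp)

variable [CharZero (IsLocalRing.ResidueField O)]

lemma valuation_lt_or_valuation_sub_lt (m : ι ⊕ κ) :
    O.valuation (Sum.elim a b m) < O.valuation l ∨
      O.valuation (Sum.elim a b m - l) < O.valuation l := by
  classical
  have hlimit := h.isDegenerateLimit_zoom_largest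
  have hm_near : O.valuation (Sum.elim a b m - 0) ≤ O.valuation l := by
    simpa using h.valuation_le m
  by_contra! hm
  have hr₀ : reductionAt O 0 l (Sum.elim a b m) ≠ 0 := by
    rw [← reductionAt_center (O := O) 0 l, Ne,
      reductionAt_eq_reductionAt_iff h.ne_zero hm_near (by simp)]
    simpa using hm.1
  have hr₁ : reductionAt O 0 l (Sum.elim a b m) ≠ 1 := by
    rw [← reductionAt_eq_one (O := O) h.ne_zero (sub_zero l), Ne,
      reductionAt_eq_reductionAt_iff h.ne_zero hm_near (by simp)]
    exact hm.2.not_gt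
  have hcard := hlimit.sum_add_card_le separable_X h.left_pos h.right_pos
    (T := {1, reductionAt O 0 l (Sum.elim a b m)})
    (Finset.insert_subset h.one_mem_image_reductionAt (Finset.singleton_subset_iff.2
      (hlimit.apply_elim_mem_image h.left_pos h.right_pos (by simp))))
    (by simp [hr₀])
  rw [Finset.card_pair hr₁.symm, h.left_sum, Finset.card_univ, Finset.card_univ,
    h.card_add_card] at hcard
  omega

lemma reductionAt_eq_one_iff (m : ι ⊕ κ) :
    reductionAt O 0 l (Sum.elim a b m) = 1 ↔ ¬ O.valuation (Sum.elim a b m) < O.valuation l := by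
  rw [← reductionAt_eq_one (O := O) h.ne_zero (sub_zero l),
    reductionAt_eq_reductionAt_iff h.ne_zero (by simpa using h.valuation_le m) (by simp)]
  refine ⟨fun hsub hlt => ?_, (h.valuation_lt_or_valuation_sub_lt m).resolve_left⟩
  rw [Valuation.map_sub_eq_of_lt_right _ hlt] at hsub
  exact lt_irrefl _ hsub

lemma exists_left_valuation_eq : ∃ i, O.valuation (a i) = O.valuation l := by
  classical
  obtain ⟨i, -, hi⟩ := Finset.mem_image.1 h.one_mem_image_reductionAt
  exact ⟨i, (h.valuation_le (.inl i)).antisymm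
    (not_lt.1 ((h.reductionAt_eq_one_iff (.inl i)).1 hi))⟩

open Classical in
lemma card_filter_lt_le_sum :
    (Finset.univ.filter fun i => O.valuation (a i) < O.valuation l).card +
      (Finset.univ.filter fun j => O.valuation (b j) < O.valuation l).card ≤
      ∑ i with O.valuation (a i) < O.valuation l, α i := by
  have hfiber := h.isDegenerateLimit_zoom_largest.sum_fiber_add_one_le X_ne_zero
    h.left_pos h.right_pos h.one_mem_image_reductionAt
  have ha (i : ι) : (reductionAt O 0 l ∘ a) i = 1 ↔ ¬ O.valuation (a i) < O.valuation l :=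
    h.reductionAt_eq_one_iff (.inl i)
  have hb (j : κ) : (reductionAt O 0 l ∘ b) j = 1 ↔ ¬ O.valuation (b j) < O.valuation l :=
    h.reductionAt_eq_one_iff (.inr j)
  simp only [ha, hb, rootMultiplicity_eq_zero (p := X) (x := (1 : IsLocalRing.ResidueField O))
    (by simp)] at hfiber
  have hι := Finset.card_filter_add_card_filter_not (s := Finset.univ)
    (fun i => O.valuation (a i) < O.valuation l)
  have hκ := Finset.card_filter_add_card_filter_not (s := Finset.univ)
    (fun j => O.valuation (b j) < O.valuation l)
  have hα := Finset.sum_filter_add_sum_filter_not Finset.univ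
    (fun i => O.valuation (a i) < O.valuation l) α
  rw [h.left_sum] at hα
  rw [Finset.card_univ] at hι hκ
  have := h.card_add_card
  omega

lemma valuation_lt_prod_max {d : K} (hdl : O.valuation d < O.valuation l) :
    O.valuation d < ∏ i, max (O.valuation d) (O.valuation (a i)) ^ α i := by
  rcases lt_or_ge (O.valuation d) 1 with hd | hd
  · calc O.valuation d < 1 := hd
      _ ≤ O.valuation ((rootProd Finset.univ α a).eval 0) := h.one_le_eval_zero
      _ = ∏ i, O.valuation (a i) ^ α i := by simp [eval_rootProd]
      _ ≤ _ := Finset.prod_le_prod' fun i _ => pow_le_pow_left₀ zero_le (le_max_right _ _) _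
  · obtain ⟨i, hi⟩ := h.exists_left_valuation_eq
    calc O.valuation d < O.valuation l := hdl
      _ ≤ max (O.valuation d) (O.valuation (a i)) := hi ▸ le_max_right _ _
      _ ≤ max (O.valuation d) (O.valuation (a i)) ^ α i :=
        le_self_pow₀ (hd.trans (le_max_left _ _)) (h.left_pos i).ne'
      _ ≤ _ := Finset.single_le_prod' (f := fun i => max (O.valuation d) (O.valuation (a i)) ^ α i)
        (fun i _ => one_le_pow₀ (hd.trans (le_max_left _ _))) (Finset.mem_univ i)

lemma valuation_eq (m : ι ⊕ κ) : O.valuation (Sum.elim a b m) = O.valuation l := by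
  classical
  by_contra hne
  obtain ⟨m', hm', hmax⟩ := Finset.exists_max_image
    (Finset.univ.filter fun m => O.valuation (Sum.elim a b m) < O.valuation l)
    (fun m => O.valuation (Sum.elim a b m))
    ⟨m, Finset.mem_filter.2 ⟨Finset.mem_univ m, (h.valuation_le m).lt_of_ne hne⟩⟩
  have hdl := (Finset.mem_filter.1 hm').2
  have hnear (m : ι ⊕ κ) : O.valuation (Sum.elim a b m - 0) ≤ O.valuation (Sum.elim a b m') ↔
      O.valuation (Sum.elim a b m) < O.valuation l := by
    rw [sub_zero]
    exact ⟨fun hle => hle.trans_lt hdl, fun hlt => hmax m (by simpa using hlt)⟩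
  have hlimit := h.isDegenerateLimit_zoom_zero (h.elim_ne_zero m') (h.valuation_lt_prod_max hdl)
  have hone := hlimit.apply_elim_mem_image h.left_pos h.right_pos (m := m') (by
    rcases m' with i | j
    · simp [nearRoots]
    · simp [nearRoots])
  rw [reductionAt_eq_one (h.elim_ne_zero m') (sub_zero _)] at hone
  have hcard := hlimit.sum_add_card_le separable_X h.left_pos h.right_pos (T := {1})
    (Finset.singleton_subset_iff.2 hone) (by simp)
  have hnear_a : nearRoots O a 0 (Sum.elim a b m') =
      Finset.univ.filter fun i => O.valuation (a i) < O.valuation l :=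
    Finset.filter_congr fun i _ => hnear (.inl i)
  have hnear_b : nearRoots O b 0 (Sum.elim a b m') =
      Finset.univ.filter fun j => O.valuation (b j) < O.valuation l :=
    Finset.filter_congr fun j _ => hnear (.inr j)
  rw [hnear_a, hnear_b, Finset.card_singleton] at hcard
  exact absurd h.card_filter_lt_le_sum (by omega)

lemma valuation_sub_lt (m : ι ⊕ κ) : O.valuation (Sum.elim a b m - l) < O.valuation l :=
  (h.valuation_lt_or_valuation_sub_lt m).resolve_left (h.valuation_eq m).not_lt

lemma valuation_sub_pow_le (m : ι ⊕ κ) : O.valuation (Sum.elim a b m - l) ^ n ≤ O.valuation l := by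
  classical
  by_contra! hlt
  have : Nonempty (ι ⊕ κ) := ⟨m⟩
  obtain ⟨m', hmax⟩ := Finite.exists_max fun m => O.valuation (Sum.elim a b m - l)
  have hdl : O.valuation l < O.valuation (Sum.elim a b m' - l) ^ n :=
    hlt.trans_le (pow_le_pow_left₀ zero_le (hmax m) n)
  have hn := h.two_le
  have hd : Sum.elim a b m' - l ≠ 0 := fun h₀ => by
    simp [h₀, show n ≠ 0 by omega] at hdl
  have hscale := prod_max_pow_eq_pow_sum (f := fun i => O.valuation (a i - l)) α
    fun i => hmax (.inl i)
  rw [h.left_sum] at hscale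
  obtain ⟨U, hU, hlU⟩ := exists_affine_eq_C_mul (h.valuation_sub_lt m')
  have hlimit := isDegenerateLimit_zoom hd h.ne_zero (by rw [h.sub_eq_X, X_comp, hlU])
    (hscale ▸ hdl)
  rw [hU, nearRoots_eq_univ (a := a) fun i => hmax (.inl i),
    nearRoots_eq_univ (a := b) fun j => hmax (.inr j)] at hlimit
  have hmem (m : ι ⊕ κ) := hlimit.apply_elim_mem_image h.left_pos h.right_pos (m := m) (by simp)
  obtain ⟨m₀, hm₀⟩ := h.exists_eq
  have hzero := hmem m₀
  have hone := hmem m'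
  rw [hm₀, reductionAt_center] at hzero
  rw [reductionAt_eq_one hd rfl] at hone
  have hcard := hlimit.sum_add_card_le separable_one h.left_pos h.right_pos (T := {0, 1})
    (Finset.insert_subset hzero (Finset.singleton_subset_iff.2 hone)) (by simp)
  rw [Finset.card_pair zero_ne_one, h.left_sum, Finset.card_univ, Finset.card_univ,
    h.card_add_card] at hcard
  omega

theorem exists_residueField_sub_eq_one [IsAlgClosed K] :
    ∃ (x : ι → IsLocalRing.ResidueField O) (z : κ → IsLocalRing.ResidueField O),
      rootProd Finset.univ α x - rootProd Finset.univ β z = 1 := by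
  have hn : n ≠ 0 := by have := h.two_le; omega
  obtain ⟨d, hdl⟩ := IsAlgClosed.exists_pow_nat_eq l (Nat.pos_of_ne_zero hn)
  have hd : d ≠ 0 := fun h₀ => h.ne_zero (by rw [← hdl, h₀, zero_pow hn])
  have hint (m : ι ⊕ κ) : (Sum.elim a b m - l) / d ∈ O := by
    rw [div_mem_iff_valuation_le hd, ← pow_le_pow_iff_left₀ zero_le zero_le hn, ← map_pow _ d, hdl]
    exact h.valuation_sub_pow_le m
  have hvd : O.valuation d < O.valuation l := by
    have hone : 1 < O.valuation d := by
      rw [← one_lt_pow_iff_of_nonneg zero_le hn, ← map_pow, hdl]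
      exact h.one_lt
    rw [← hdl, map_pow]
    exact lt_self_pow₀ hone h.two_le
  obtain ⟨U, hU, hlU⟩ := exists_affine_eq_C_mul hvd
  set x : ι → O := fun i => integralPart O ((a i - l) / d)
  set z : κ → O := fun j => integralPart O ((b j - l) / d)
  have hxz : rootProd Finset.univ α x - rootProd Finset.univ β z = U := by
    apply Polynomial.map_injective O.subtype Subtype.val_injective
    have hx : O.subtype ∘ x = fun i => (a i - l) / d :=
      funext fun i => coe_integralPart O (hint (.inl i))
    have hz : O.subtype ∘ z = fun j => (b j - l) / d :=
      funext fun j => coe_integralPart O (hint (.inr j))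
    refine mul_left_cancel₀ (C_ne_zero.2 h.ne_zero) ?_
    have hP := rootProd_comp_affine Finset.univ α a l hd
    have hQ := rootProd_comp_affine Finset.univ β b l hd
    rw [h.left_sum, hdl] at hP
    rw [h.right_sum, hdl] at hQ
    rw [Polynomial.map_sub, map_rootProd, map_rootProd, hx, hz, mul_sub, ← hP, ← hQ, ← sub_comp,
      h.sub_eq_X, X_comp, hlU]
  refine ⟨IsLocalRing.residue O ∘ x, IsLocalRing.residue O ∘ z, ?_⟩
  rw [← map_rootProd, ← map_rootProd, ← Polynomial.map_sub, hxz, hU]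

end IsDivergentSolution

end ResidueSolution

section Specialization

lemma exists_valuationSubring_integralClosure_le_notMem {F K : Type*} [Field F] [Field K]
    [Algebra F K] {x : K} (hx : ¬ IsIntegral F x) :
    ∃ O : ValuationSubring K, (∀ y, IsIntegral F y → y ∈ O) ∧ x ∉ O := by
  have : IsIntegrallyClosedIn (integralClosure F K).toSubring K :=
    inferInstanceAs (IsIntegrallyClosedIn (integralClosure F K) K)
  obtain ⟨O, hO, hxO⟩ := Subring.exists_le_valuationSubring_of_isIntegrallyClosedIn
    (R := (integralClosure F K).toSubring) hx
  exact ⟨O, fun y hy => hO hy, hxO⟩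

lemma nonempty_algHom_of_finiteType (F B L : Type*) [Field F] [CommRing B] [Nontrivial B]
    [Algebra F B] [Algebra.FiniteType F B] [Field L] [IsAlgClosed L] [Algebra F L] :
    Nonempty (B →ₐ[F] L) := by
  obtain ⟨m, hm⟩ := Ideal.exists_maximal B
  let : Field (B ⧸ m) := Ideal.Quotient.field m
  have : Module.Finite F (B ⧸ m) := finite_of_finite_type_of_isJacobsonRing F (B ⧸ m)
  exact ⟨(IsAlgClosed.lift (R := F) (S := B ⧸ m)).comp (Ideal.Quotient.mkₐ F m)⟩

lemma one_lt_valuation_of_notMem {K : Type*} [Field K] {O : ValuationSubring K} {x : K}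
    (hx : x ∉ O) : 1 < O.valuation x :=
  not_le.1 (mt (O.valuation_le_one_iff x).1 hx)

variable {F K ι κ : Type*} [Field F] [Field K] [Algebra F K] [Fintype ι] {a : ι → K} {b : κ → K}

lemma exists_valuationSubring_one_le_eval_zero {α : ι → ℕ} {m : ι ⊕ κ}
    (hm : ¬ IsIntegral F (Sum.elim a b m))
    (heval : (rootProd Finset.univ α a).eval 0 ≠ 0) :
    ∃ O : ValuationSubring K, (∀ y, IsIntegral F y → y ∈ O) ∧
      1 ≤ O.valuation ((rootProd Finset.univ α a).eval 0) ∧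
      ∃ m, 1 < O.valuation (Sum.elim a b m) := by
  by_cases hint : IsIntegral F ((rootProd Finset.univ α a).eval 0)
  · obtain ⟨O, hO, hmO⟩ := exists_valuationSubring_integralClosure_le_notMem hm
    refine ⟨O, hO, ?_, m, one_lt_valuation_of_notMem hmO⟩
    have hinv := (O.valuation_le_one_iff _).2 (hO _ hint.inv)
    rwa [map_inv₀, inv_le_one₀ (zero_lt_iff.2 ((Valuation.ne_zero_iff _).2 heval))] at hinv
  · obtain ⟨O, hO, hevalO⟩ := exists_valuationSubring_integralClosure_le_notMem hint
    refine ⟨O, hO, (one_lt_valuation_of_notMem hevalO).le, ?_⟩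
    by_contra! hle
    rw [eval_rootProd] at hevalO
    exact hevalO (prod_mem fun i _ => pow_mem
      (by simpa using (O.valuation_le_one_iff _).1 (hle (.inl i))) _)

variable [Fintype κ] {n : ℕ} {α : ι → ℕ} {β : κ → ℕ}

variable (F) in
lemma exists_rootProd_sub_eq_one_of_algebra {k L : Type*} [Field k] [Algebra F k] [Field L]
    [IsAlgClosed L] [Algebra F L] {x : ι → k} {z : κ → k}
    (hxz : rootProd Finset.univ α x - rootProd Finset.univ β z = 1) :
    ∃ (a : ι → L) (b : κ → L), rootProd Finset.univ α a - rootProd Finset.univ β b = 1 := by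
  let B : Subalgebra F k := Algebra.adjoin F (Set.range (Sum.elim x z))
  have : Algebra.FiniteType F B :=
    B.fg_iff_finiteType.1 (Subalgebra.fg_def.2 ⟨_, Set.finite_range _, rfl⟩)
  obtain ⟨φ⟩ := nonempty_algHom_of_finiteType F B L
  let y (m : ι ⊕ κ) : B := ⟨Sum.elim x z m, Algebra.subset_adjoin ⟨m, rfl⟩⟩
  have hB : rootProd Finset.univ α (y ∘ Sum.inl) - rootProd Finset.univ β (y ∘ Sum.inr) = 1 := by
    apply Polynomial.map_injective (B.val : B →+* k) Subtype.val_injective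
    rw [Polynomial.map_sub, map_rootProd, map_rootProd, Polynomial.map_one]
    exact hxz
  refine ⟨φ ∘ y ∘ Sum.inl, φ ∘ y ∘ Sum.inr, ?_⟩
  have hL := congrArg (Polynomial.map (φ : B →+* L)) hB
  rwa [Polynomial.map_sub, map_rootProd, map_rootProd, Polynomial.map_one] at hL

theorem IsTreePassport.exists_sub_eq_one_of_sub_eq_X [CharZero F] [IsAlgClosed K]
    (h : IsTreePassport n α β) (hn : 2 ≤ n)
    (hX : rootProd Finset.univ α a - rootProd Finset.univ β b = X)
    (heval : (rootProd Finset.univ α a).eval 0 ≠ 0) {m : ι ⊕ κ}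
    (hm : ¬ IsIntegral F (Sum.elim a b m)) :
    ∃ (a : ι → K) (b : κ → K), rootProd Finset.univ α a - rootProd Finset.univ β b = 1 := by
  obtain ⟨O, hO, hone, m', hm'⟩ := exists_valuationSubring_one_le_eval_zero hm heval
  let φ : F →+* IsLocalRing.ResidueField O := (IsLocalRing.residue O).comp
    ((algebraMap F K).codRestrict O.toSubring fun _ => hO _ isIntegral_algebraMap)
  have := charZero_of_injective_ringHom φ.injective
  have : Nonempty (ι ⊕ κ) := ⟨m⟩
  obtain ⟨l, hl⟩ := Finite.exists_max fun m => O.valuation (Sum.elim a b m)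
  have hdiv : IsDivergentSolution O n α β a b (Sum.elim a b l) :=
    { h with
      two_le := hn
      sub_eq_X := hX
      one_le_eval_zero := hone
      one_lt := hm'.trans_le (hl m')
      exists_eq := ⟨l, rfl⟩
      valuation_le := hl }
  obtain ⟨x, z, hxz⟩ := hdiv.exists_residueField_sub_eq_one
  let := φ.toAlgebra
  exact exists_rootProd_sub_eq_one_of_algebra F hxz

end Specialization

section DistinctRoots

lemma rootProd_dvd_pow_sum {R ι : Type*} [CommRing R] {s : Finset ι} (α : ι → ℕ) {a : ι → R}
    {p : R[X]} (hp : ∀ i ∈ s, X - C (a i) ∣ p) : rootProd s α a ∣ p ^ ∑ i ∈ s, α i := by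
  rw [← Finset.prod_pow_eq_pow_sum]
  exact Finset.prod_dvd_prod_of_dvd _ _ fun i hi => pow_dvd_pow_of_dvd (hp i hi) _

variable {K ι κ : Type*} [Field K] [CharZero K] [Fintype ι] [Fintype κ] {n : ℕ} {α : ι → ℕ}
  {β : κ → ℕ} {a : ι → K} {b : κ → K}

open UniqueFactorizationMonoid in
lemma sum_lt_card_image_of_sub_eq_one [DecidableEq K] (hα : ∑ i, α i ≠ 0)
    (hab : rootProd Finset.univ α a - rootProd Finset.univ β b = 1) :
    ∑ i, α i < (Finset.univ.image (Sum.elim a b)).card := by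
  set P := rootProd Finset.univ α a
  set Q := rootProd Finset.univ β b
  set R : K[X] := ∏ r ∈ Finset.univ.image (Sum.elim a b), (X - C r)
  have hP₀ : P ≠ 0 := (monic_rootProd _ α a).ne_zero
  have hQ₀ : Q ≠ 0 := (monic_rootProd _ β b).ne_zero
  have hR (m : ι ⊕ κ) : X - C (Sum.elim a b m) ∣ R :=
    Finset.dvd_prod_of_mem (fun r => X - C r) (Finset.mem_image_of_mem _ (Finset.mem_univ m))
  have hPQR : radical (P * -Q * -1) ∣ R := by
    rw [show P * -Q * -1 = P * Q by ring, ← exists_dvd_pow_iff_radical_dvd (mul_ne_zero hP₀ hQ₀)]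
    refine ⟨∑ i, α i + ∑ j, β j, ?_⟩
    rw [pow_add]
    exact mul_dvd_mul (rootProd_dvd_pow_sum α fun i _ => hR (.inl i))
      (rootProd_dvd_pow_sum β fun j _ => hR (.inr j))
  rcases Polynomial.abc hP₀ (neg_ne_zero.2 hQ₀) (neg_ne_zero.2 one_ne_zero)
    ⟨1, 1, by linear_combination hab⟩ (by linear_combination hab) with habc | ⟨hder, -⟩
  · calc ∑ i, α i + 1 = P.natDegree + 1 := by rw [natDegree_rootProd]
      _ ≤ (radical (P * -Q * -1)).natDegree := habc.1
      _ ≤ R.natDegree := natDegree_le_of_dvd hPQR (monic_prod_X_sub_C _ _).ne_zero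
      _ = (Finset.univ.image (Sum.elim a b)).card := natDegree_finsetProd_X_sub_C_eq_card _ _
  · exact absurd (derivative_eq_zero.1 hder) (natDegree_rootProd _ α a ▸ hα)

lemma IsTreePassport.one_le (h : IsTreePassport n α β) : 1 ≤ n := by
  have hα := sum_pred_add_card Finset.univ h.left_pos
  have hβ := sum_pred_add_card Finset.univ h.right_pos
  rw [h.left_sum, Finset.card_univ] at hα
  rw [h.right_sum, Finset.card_univ] at hβ
  have := h.card_add_card
  omega

theorem IsTreePassport.injective_elim (h : IsTreePassport n α β)
    (hab : rootProd Finset.univ α a - rootProd Finset.univ β b = 1) :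
    Function.Injective (Sum.elim a b) := by
  classical
  have hlt := sum_lt_card_image_of_sub_eq_one (h.left_sum ▸ Nat.one_le_iff_ne_zero.1 h.one_le) hab
  rw [h.left_sum] at hlt
  have hcard : (Finset.univ.image (Sum.elim a b)).card =
      (Finset.univ : Finset (ι ⊕ κ)).card := by
    refine Finset.card_image_le.antisymm ?_
    rwa [Finset.card_univ, Fintype.card_sum, h.card_add_card]
  exact Set.injOn_univ.1 (by simpa using Finset.card_image_iff.1 hcard)

end DistinctRoots

section RootVariation

variable {R ι : Type*} [CommRing R] [Fintype ι] [DecidableEq ι]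

/-- The derivative of `rootProd univ α` at `a` in the direction `-v`: moving one root of
multiplicity `α i` lowers its exponent by one. -/
noncomputable def rootVariation (α : ι → ℕ) (a v : ι → R) : R[X] :=
  ∑ i, C (α i * v i) * rootProd Finset.univ (Function.update α i (α i - 1)) a

lemma degree_rootVariation_lt [Nontrivial R] {α : ι → ℕ} (hα : ∀ i, 0 < α i) (a v : ι → R) :
    (rootVariation α a v).degree < ((∑ i, α i : ℕ) : WithBot ℕ) := by
  rw [rootVariation, ← mem_degreeLT]
  refine Submodule.sum_mem _ fun i _ => mem_degreeLT.2 ?_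
  refine (degree_le_of_natDegree_le ((natDegree_C_mul_le _ _).trans_eq
    (natDegree_rootProd _ _ a))).trans_lt ?_
  rw [Nat.cast_lt, Finset.sum_update_of_mem (Finset.mem_univ i),
    ← Finset.add_sum_erase _ _ (Finset.mem_univ i), Finset.sdiff_singleton_eq_erase]
  have := hα i
  omega

lemma rootProd_dvd_rootVariation {α α' : ι → ℕ} {a v : ι → R}
    (h : ∀ i, v i ≠ 0 → ∀ j, α' j ≤ Function.update α i (α i - 1) j) :
    rootProd Finset.univ α' a ∣ rootVariation α a v := by
  refine Finset.dvd_sum fun i _ => ?_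
  by_cases hi : v i = 0
  · simp [hi]
  · exact (rootProd_dvd_rootProd (fun j _ => h i hi j) a).mul_left _

lemma eq_zero_of_rootVariation_eq_zero [IsDomain R] [CharZero R] {α : ι → ℕ} (hα : ∀ i, 0 < α i)
    {a v : ι → R} (ha : Function.Injective a) (h : rootVariation α a v = 0) : v = 0 := by
  classical
  funext i
  by_contra hi
  have hdvd : (X - C (a i)) ^ α i ∣
      C (α i * v i) * rootProd Finset.univ (Function.update α i (α i - 1)) a := by
    rw [rootVariation, ← Finset.add_sum_erase _ _ (Finset.mem_univ i),
      add_eq_zero_iff_eq_neg] at h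
    rw [h, dvd_neg]
    refine Finset.dvd_sum fun j hj => Dvd.dvd.mul_left ?_ _
    rw [rootProd, ← Finset.mul_prod_erase _ _ (Finset.mem_univ i),
      Function.update_of_ne (Finset.ne_of_mem_erase hj).symm]
    exact dvd_mul_right _ _
  have hne : (α i : R) * v i ≠ 0 := mul_ne_zero (Nat.cast_ne_zero.2 (hα i).ne') hi
  have hle := (le_rootMultiplicity_iff
    (mul_ne_zero (C_ne_zero.2 hne) (monic_rootProd _ _ a).ne_zero)).2 hdvd
  rw [rootMultiplicity_mul (mul_ne_zero (C_ne_zero.2 hne) (monic_rootProd _ _ a).ne_zero),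
    rootMultiplicity_C, rootMultiplicity_rootProd] at hle
  simp only [ha.eq_iff, Finset.filter_eq', Finset.mem_univ, if_true, Finset.sum_singleton,
    Function.update_self] at hle
  have := hα i
  omega

lemma hasDerivAt_eval_rootProd (α : ι → ℕ) (a v : ι → ℂ) (z : ℂ) :
    HasDerivAt (fun t : ℂ => (rootProd Finset.univ α (a + t • v)).eval z)
      (-(rootVariation α a v).eval z) 0 := by
  have hprod := HasDerivAt.fun_finsetProd (u := Finset.univ) fun i _ =>
    (((hasDerivAt_id (0 : ℂ)).smul_const (v i)).const_add (a i)).const_sub z |>.pow (α i)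
  simp only [eval_rootProd, rootVariation, eval_finsetSum, eval_mul, eval_C]
  refine hprod.congr_deriv ?_
  simp only [← Finset.sum_neg_distrib]
  refine Finset.sum_congr rfl fun i _ => ?_
  have herase : ∏ j ∈ Finset.univ.erase i, (z - a j) ^ Function.update α i (α i - 1) j =
      ∏ j ∈ Finset.univ.erase i, (z - a j) ^ α j :=
    Finset.prod_congr rfl fun j hj => by rw [Function.update_of_ne (Finset.ne_of_mem_erase hj)]
  rw [← Finset.mul_prod_erase Finset.univ _ (Finset.mem_univ i), herase, Function.update_self]
  simp only [Pi.pow_apply, id_eq, smul_eq_mul, zero_mul, add_zero]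
  ring

end RootVariation

section Deformation

open Filter Topology

lemma exists_tendsto_eventually_eq_of_injective {𝕜 E₁ E₂ F : Type*} [NontriviallyNormedField 𝕜]
    [CompleteSpace 𝕜] [NormedAddCommGroup E₁] [NormedSpace 𝕜 E₁] [CompleteSpace E₁]
    [NormedAddCommGroup E₂] [NormedSpace 𝕜 E₂] [FiniteDimensional 𝕜 E₂]
    [NormedAddCommGroup F] [NormedSpace 𝕜 F] [FiniteDimensional 𝕜 F]
    {f : E₁ × E₂ → F} {f' : E₁ × E₂ →L[𝕜] F} {u : E₁ × E₂} (hf : HasStrictFDerivAt f f' u)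
    (hinj : ∀ v, f' (0, v) = 0 → v = 0)
    (hdim : Module.finrank 𝕜 E₂ = Module.finrank 𝕜 F) :
    ∃ ψ : E₁ → E₂, Tendsto ψ (𝓝 u.1) (𝓝 u.2) ∧ ∀ᶠ x in 𝓝 u.1, f (x, ψ x) = f u := by
  have := FiniteDimensional.complete 𝕜 E₂
  have := FiniteDimensional.complete 𝕜 F
  have hinv : (f' ∘L .inr 𝕜 E₁ E₂).IsInvertible := by
    let e := LinearEquiv.ofInjectiveOfFinrankEq (f' ∘L .inr 𝕜 E₁ E₂ : E₂ →ₗ[𝕜] F)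
      ((injective_iff_map_eq_zero _).2 hinj) hdim
    exact ⟨e.toContinuousLinearEquiv, by ext; rfl⟩
  exact ⟨hf.implicitFunctionOfProdDomain hinv, hf.tendsto_implicitFunctionOfProdDomain hinv,
    hf.eventually_apply_implicitFunctionOfProdDomain hinv⟩

lemma rootProd_comp_eq_of_sum_fiber {R ι ι' : Type*} [CommRing R] [Fintype ι] [DecidableEq ι]
    [Fintype ι'] {α : ι → ℕ} {α' : ι' → ℕ} {π : ι' → ι} (hπ : ∀ i, ∑ k with π k = i, α' k = α i)
    (a : ι → R) : rootProd Finset.univ α' (a ∘ π) = rootProd Finset.univ α a := by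
  rw [rootProd, rootProd, ← Finset.prod_fiberwise Finset.univ π]
  refine Finset.prod_congr rfl fun i _ => ?_
  rw [← hπ i, ← Finset.prod_pow_eq_pow_sum]
  exact Finset.prod_congr rfl fun k hk => by rw [Function.comp_apply, (Finset.mem_filter.1 hk).2]

lemma eq_of_degree_lt_of_eval_natCast_eq {R : Type*} [CommRing R] [IsDomain R] [CharZero R] {n : ℕ}
    {p q : R[X]} (hp : p.degree < n) (hq : q.degree < n)
    (h : ∀ k : Fin n, p.eval (k : R) = q.eval (k : R)) : p = q :=
  eq_of_degrees_lt_of_eval_index_eq (s := Finset.univ) (v := fun k : Fin n => ((k : ℕ) : R))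
    (fun _ _ _ _ hk => Fin.ext (Nat.cast_injective hk)) (by simpa using hp) (by simpa using hq)
    fun k _ => h k

lemma degree_rootProd_sub_rootProd_lt {R ι κ : Type*} [CommRing R] [Nontrivial R] [Fintype ι]
    [Fintype κ] {n : ℕ} {α : ι → ℕ} {β : κ → ℕ} (hα : ∑ i, α i = n) (hβ : ∑ j, β j = n) (a : ι → R)
    (b : κ → R) : (rootProd Finset.univ α a - rootProd Finset.univ β b).degree < n := by
  have hP := monic_rootProd Finset.univ α a
  have hQ := monic_rootProd Finset.univ β b
  have hdegP : (rootProd Finset.univ α a).degree = n := by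
    rw [degree_eq_natDegree hP.ne_zero, natDegree_rootProd, hα]
  have hdegQ : (rootProd Finset.univ β b).degree = n := by
    rw [degree_eq_natDegree hQ.ne_zero, natDegree_rootProd, hβ]
  exact hdegP ▸ degree_sub_lt_left (hdegP.trans hdegQ.symm) hP.ne_zero
    (hP.leadingCoeff.trans hQ.leadingCoeff.symm)

variable {ι κ : Type*} [Fintype ι] [Fintype κ] {n : ℕ} {α : ι → ℕ} {β : κ → ℕ}

/-- `P` and `Q` may share a root only if it is the marked root `b j₀` of `Q` and a simple root of
`P`. This is what makes `P - Q` and `b j₀` local coordinates on the space of roots. -/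
structure IsTransversal {K : Type*} (α : ι → ℕ) (a : ι → K) (b : κ → K) (j₀ : κ) : Prop where
  left_injective : Function.Injective a
  right_injective : Function.Injective b
  of_eq : ∀ i j, a i = b j → α i = 1 ∧ j = j₀

lemma IsTransversal.isCoprime {K : Type*} [Field K] {a : ι → K} {b : κ → K} {j₀ : κ}
    (hab : IsTransversal α a b j₀) (β' : κ → ℕ) :
    IsCoprime (rootProd Finset.univ (fun i => α i - 1) a) (rootProd Finset.univ β' b) := by
  refine IsCoprime.prod_left fun i _ => IsCoprime.prod_right fun j _ => ?_
  by_cases hij : a i = b j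
  · simp [(hab.of_eq i j hij).1, isCoprime_one_left]
  · exact (isCoprime_X_sub_C_of_isUnit_sub (sub_ne_zero.2 hij).isUnit).pow

lemma IsTreePassport.rootVariation_injective [DecidableEq ι] [DecidableEq κ] {K : Type*} [Field K]
    [CharZero K] {a v : ι → K} {b w : κ → K} {j₀ : κ} (h : IsTreePassport n α β)
    (hab : IsTransversal α a b j₀) (hw : w j₀ = 0)
    (hvw : rootVariation α a v = rootVariation β b w) : v = 0 ∧ w = 0 := by
  set β' := Function.update (fun j => β j - 1) j₀ (β j₀) with hβ'
  have hdvd_left : rootProd Finset.univ (fun i => α i - 1) a ∣ rootVariation α a v :=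
    rootProd_dvd_rootVariation fun i _ j => by grind [Function.update_apply]
  have hdvd_right : rootProd Finset.univ β' b ∣ rootVariation β b w :=
    rootProd_dvd_rootVariation fun i hi j => by grind [Function.update_apply]
  have hdeg : (rootProd Finset.univ (fun i => α i - 1) a * rootProd Finset.univ β' b).natDegree
      = n := by
    have hα := sum_pred_add_card Finset.univ h.left_pos
    have hβ := sum_pred_add_card (Finset.univ.erase j₀) h.right_pos
    have hcard := Finset.card_erase_add_one (Finset.mem_univ j₀)
    have hsum := Finset.add_sum_erase Finset.univ β (Finset.mem_univ j₀)
    rw [h.left_sum, Finset.card_univ] at hα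
    rw [h.right_sum] at hsum
    rw [Finset.card_univ] at hcard
    rw [(monic_rootProd _ _ _).natDegree_mul (monic_rootProd _ _ _), natDegree_rootProd,
      natDegree_rootProd, hβ', Finset.sum_update_of_mem (Finset.mem_univ j₀),
      Finset.sdiff_singleton_eq_erase]
    have := h.card_add_card
    omega
  have hzero : rootVariation α a v = 0 := by
    refine eq_zero_of_dvd_of_degree_lt
      ((hab.isCoprime β').mul_dvd hdvd_left (hvw ▸ hdvd_right)) ?_
    rw [degree_eq_natDegree ((monic_rootProd _ _ _).mul (monic_rootProd _ _ _)).ne_zero, hdeg,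
      ← h.left_sum]
    exact degree_rootVariation_lt h.left_pos a v
  exact ⟨eq_zero_of_rootVariation_eq_zero h.left_pos hab.left_injective hzero,
    eq_zero_of_rootVariation_eq_zero h.right_pos hab.right_injective (hvw ▸ hzero)⟩

variable {ι' : Type*} [Fintype ι'] {α' : ι' → ℕ} {π : ι' → ι} {a : ι → ℂ} {b : κ → ℂ} {j₀ : κ}
  {L : ℂ[X]}

/-- The equations of the deformation problem, at parameters `((e, z), (s, t))`: the marked root
`t j₀` is to be `z`, and the values at `0, …, n - 1` of the difference of the polynomials with roots
`s ∘ π + e` and `t` are to be prescribed. -/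
noncomputable def deformationMap (n : ℕ) (α' : ι' → ℕ) (β : κ → ℕ) (π : ι' → ι) (j₀ : κ)
    (x : ((ι' → ℂ) × ℂ) × (ι → ℂ) × (κ → ℂ)) : ℂ × (Fin n → ℂ) :=
  (x.2.2 j₀ - x.1.2, fun k =>
    (rootProd Finset.univ α' (x.2.1 ∘ π + x.1.1) - rootProd Finset.univ β x.2.2).eval (k : ℂ))

lemma contDiff_deformationMap (n : ℕ) (α' : ι' → ℕ) (β : κ → ℕ) (π : ι' → ι) (j₀ : κ) :
    ContDiff ℂ 1 (deformationMap n α' β π j₀) := by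
  unfold deformationMap
  simp only [eval_sub, eval_rootProd, Pi.add_apply, Function.comp_apply]
  fun_prop

lemma hasDerivAt_deformationMap [DecidableEq ι] [DecidableEq κ] (n : ℕ)
    (hπ : ∀ i, ∑ k with π k = i, α' k = α i) (β : κ → ℕ) (j₀ : κ) (a v : ι → ℂ) (b w : κ → ℂ) :
    HasDerivAt (fun τ : ℂ => deformationMap n α' β π j₀ ((0, b j₀), a + τ • v, b + τ • w))
      (w j₀, fun k : Fin n => (rootVariation β b w - rootVariation α a v).eval (k : ℂ)) 0 := by
  simp only [deformationMap, add_zero, rootProd_comp_eq_of_sum_fiber hπ, Pi.add_apply,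
    Pi.smul_apply, add_sub_cancel_left, eval_sub]
  refine HasDerivAt.prodMk ?_ (hasDerivAt_pi.2 fun k => ?_)
  · simpa using (hasDerivAt_id (0 : ℂ)).smul_const (w j₀)
  · exact ((hasDerivAt_eval_rootProd α a v k).sub (hasDerivAt_eval_rootProd β b w k)).congr_deriv
      (by ring)

lemma IsTreePassport.fderiv_deformationMap_injective [DecidableEq ι] (h : IsTreePassport n α β)
    (hab : IsTransversal α a b j₀) (hπ : ∀ i, ∑ k with π k = i, α' k = α i)
    {x : (ι → ℂ) × (κ → ℂ)}
    (hx : fderiv ℂ (deformationMap n α' β π j₀) ((0, b j₀), a, b) (0, x) = 0) : x = 0 := by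
  classical
  obtain ⟨v, w⟩ := x
  have hline : HasLineDerivAt ℂ (deformationMap n α' β π j₀) 0 ((0, b j₀), a, b) (0, v, w) :=
    hx ▸ HasFDerivAt.hasLineDerivAt
      ((contDiff_deformationMap n α' β π j₀).differentiable one_ne_zero _).hasFDerivAt (0, v, w)
  have hzero := (hasDerivAt_deformationMap n hπ β j₀ a v b w).unique
    (by simpa [HasLineDerivAt] using hline)
  obtain ⟨hw, heval⟩ := Prod.mk.inj hzero
  have hvw : rootVariation α a v = rootVariation β b w := by
    refine eq_of_degree_lt_of_eval_natCast_eq (n := n) ?_ ?_ fun k => ?_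
    · simpa [h.left_sum] using degree_rootVariation_lt h.left_pos a v
    · simpa [h.right_sum] using degree_rootVariation_lt h.right_pos b w
    · exact (sub_eq_zero.1 (by simpa using congrFun heval k)).symm
  obtain ⟨hv, hw⟩ := h.rootVariation_injective hab hw hvw
  rw [hv, hw, Prod.mk_zero_zero]

theorem IsTreePassport.exists_deformation [DecidableEq ι] (h : IsTreePassport n α β)
    (hab : IsTransversal α a b j₀) (hπ : ∀ i, ∑ k with π k = i, α' k = α i)
    (hL : rootProd Finset.univ α a - rootProd Finset.univ β b = L) :
    ∃ (s : (ι' → ℂ) × ℂ → ι → ℂ) (t : (ι' → ℂ) × ℂ → κ → ℂ),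
      Tendsto s (𝓝 (0, b j₀)) (𝓝 a) ∧ Tendsto t (𝓝 (0, b j₀)) (𝓝 b) ∧
      ∀ᶠ x in 𝓝 (0, b j₀), t x j₀ = x.2 ∧
        rootProd Finset.univ α' (s x ∘ π + x.1) - rootProd Finset.univ β (t x) = L := by
  obtain ⟨ψ, hψ, hψeq⟩ := exists_tendsto_eventually_eq_of_injective
    ((contDiff_deformationMap n α' β π j₀).contDiffAt.hasStrictFDerivAt one_ne_zero)
    (fun x hx => h.fderiv_deformationMap_injective hab hπ hx)
    (by simpa [add_comm 1 n] using h.card_add_card)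
  refine ⟨fun x => (ψ x).1, fun x => (ψ x).2, hψ.fst_nhds, hψ.snd_nhds, hψeq.mono fun x hx => ?_⟩
  obtain ⟨hroot, heval⟩ := Prod.mk.inj hx
  refine ⟨sub_eq_zero.1 (by simpa using hroot), ?_⟩
  have hsum : ∑ k, α' k = n := by
    rw [← Finset.sum_fiberwise Finset.univ π, Finset.sum_congr rfl fun i _ => hπ i, h.left_sum]
  refine eq_of_degree_lt_of_eval_natCast_eq (degree_rootProd_sub_rootProd_lt hsum h.right_sum _ _)
    (hL ▸ degree_rootProd_sub_rootProd_lt h.left_sum h.right_sum _ _) fun k => ?_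
  have hk := congrFun heval k
  rwa [add_zero, rootProd_comp_eq_of_sum_fiber hπ, hL] at hk

end Deformation

section TreePassport

open Filter Topology

namespace IsTreePassport

variable {ι κ : Type*} [Fintype ι] [Fintype κ] {n : ℕ} {α : ι → ℕ} {β : κ → ℕ}

lemma symm (h : IsTreePassport n α β) : IsTreePassport n β α :=
  ⟨h.right_pos, h.left_pos, h.right_sum, h.left_sum, add_comm (Fintype.card ι) _ ▸ h.card_add_card⟩

lemma exists_left_eq_one_or_exists_right_eq_one (h : IsTreePassport n α β) :
    (∃ i, α i = 1) ∨ ∃ j, β j = 1 := by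
  by_contra! hne
  have hα := Finset.card_nsmul_le_sum Finset.univ α 2 fun i _ =>
    (Nat.succ_le_of_lt (h.left_pos i)).lt_of_ne' (hne.1 i)
  have hβ := Finset.card_nsmul_le_sum Finset.univ β 2 fun j _ =>
    (Nat.succ_le_of_lt (h.right_pos j)).lt_of_ne' (hne.2 j)
  rw [Finset.card_univ, smul_eq_mul, h.left_sum] at hα
  rw [Finset.card_univ, smul_eq_mul, h.right_sum] at hβ
  have := h.card_add_card
  omega

lemma exists_two_le_right (h : IsTreePassport n α β) (hn : 2 ≤ n) {i₀ : ι} (hi₀ : α i₀ = 1) :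
    ∃ j, 2 ≤ β j := by
  by_contra! hlt
  have hβ := Finset.sum_le_card_nsmul Finset.univ β 1 fun j _ => Nat.le_of_lt_succ (hlt j)
  rw [h.right_sum, Finset.card_univ, smul_eq_mul, mul_one] at hβ
  have : Subsingleton ι := Fintype.card_le_one_iff_subsingleton.1 (by
    have := h.card_add_card
    omega)
  have := h.left_sum
  rw [Fintype.sum_subsingleton α i₀, hi₀] at this
  omega

lemma prune [DecidableEq ι] [DecidableEq κ] (h : IsTreePassport (n + 1) α β) {i₀ : ι}
    (hi₀ : α i₀ = 1) {j₀ : κ} (hj₀ : 2 ≤ β j₀) :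
    IsTreePassport n (fun i : {i // i ≠ i₀} => α i) (Function.update β j₀ (β j₀ - 1)) where
  left_pos i := h.left_pos i
  right_pos j := by
    rcases eq_or_ne j j₀ with rfl | hj
    · rw [Function.update_self]
      omega
    · simpa [hj] using h.right_pos j
  left_sum := by
    have := h.left_sum
    rw [Fintype.sum_eq_add_sum_subtype_ne α i₀] at this
    omega
  right_sum := by
    have := h.right_sum
    rw [Finset.sum_update_of_mem (Finset.mem_univ j₀), Finset.sdiff_singleton_eq_erase]
    rw [← Finset.add_sum_erase _ _ (Finset.mem_univ j₀)] at this
    omega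
  card_add_card := by
    have := h.card_add_card
    have : 0 < Fintype.card ι := Fintype.card_pos_iff.2 ⟨i₀⟩
    rw [Fintype.card_subtype_compl, Fintype.card_subtype_eq]
    omega

end IsTreePassport

lemma rootProd_extend {R ι : Type*} [CommRing R] [Fintype ι] [DecidableEq ι] {α : ι → ℕ} {i₀ : ι}
    (hi₀ : α i₀ = 1) (a : {i // i ≠ i₀} → R) (r : R) :
    rootProd Finset.univ α (Function.extend Subtype.val a fun _ => r) =
      (X - C r) * rootProd Finset.univ (fun i : {i // i ≠ i₀} => α i) a := by
  rw [rootProd, Fintype.prod_eq_mul_prod_subtype_ne _ i₀, Function.extend_apply' _ _ _ (by simp),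
    hi₀, pow_one]
  simp only [Subtype.val_injective.extend_apply, rootProd]

lemma rootProd_eq_X_sub_C_mul {R κ : Type*} [CommRing R] [Fintype κ] [DecidableEq κ] {β : κ → ℕ}
    {j₀ : κ} (hj₀ : 0 < β j₀) (b : κ → R) :
    rootProd Finset.univ β b =
      (X - C (b j₀)) * rootProd Finset.univ (Function.update β j₀ (β j₀ - 1)) b := by
  rw [rootProd, rootProd, Fintype.prod_eq_mul_prod_subtype_ne _ j₀,
    Fintype.prod_eq_mul_prod_subtype_ne (fun j => (X - C (b j)) ^ Function.update _ _ _ j) j₀,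
    ← mul_assoc, Function.update_self, mul_pow_sub_one hj₀.ne']
  exact congrArg _ (Finset.prod_congr rfl fun j _ => by rw [Function.update_of_ne j.2])

section AffineSubstitution

variable {K ι κ : Type*} [Field K] [Fintype ι] [Fintype κ] {n : ℕ} {α : ι → ℕ} {β : κ → ℕ}
  {a : ι → K} {b : κ → K}

lemma C_pow_mul_rootProd_sub_rootProd_eq_one (hα : ∑ i, α i = n) (hβ : ∑ j, β j = n)
    (hab : rootProd Finset.univ α a - rootProd Finset.univ β b = 1) (y : K) {d : K} (hd : d ≠ 0) :
    C (d ^ n) * (rootProd Finset.univ α (fun i => (a i - y) / d) -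
      rootProd Finset.univ β fun j => (b j - y) / d) = 1 := by
  have hcomp := congrArg (fun p => p.comp (C y + C d * X)) hab
  simpa only [sub_comp, rootProd_comp_affine _ _ _ _ hd, hα, hβ, one_comp, ← mul_sub] using hcomp

lemma exists_sub_eq_one_and_eq_zero (hα : ∑ i, α i = n) (hβ : ∑ j, β j = n)
    (hab : rootProd Finset.univ α a - rootProd Finset.univ β b = 1) (j₀ : κ) :
    ∃ (a : ι → K) (b : κ → K), rootProd Finset.univ α a - rootProd Finset.univ β b = 1 ∧
      b j₀ = 0 := by
  have h := C_pow_mul_rootProd_sub_rootProd_eq_one hα hβ hab (b j₀) one_ne_zero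
  rw [one_pow, C_1, one_mul] at h
  exact ⟨_, _, h, by rw [sub_self, zero_div]⟩

lemma exists_sub_eq_one_symm [IsAlgClosed K] (hn : n ≠ 0) (hα : ∑ i, α i = n) (hβ : ∑ j, β j = n)
    (hab : rootProd Finset.univ α a - rootProd Finset.univ β b = 1) :
    ∃ (b : κ → K) (a : ι → K), rootProd Finset.univ β b - rootProd Finset.univ α a = 1 := by
  obtain ⟨r, hr⟩ := IsAlgClosed.exists_pow_nat_eq (-1 : K) (Nat.pos_of_ne_zero hn)
  have hr₀ : r ≠ 0 := by
    rintro rfl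
    simp [hn] at hr
  have h := C_pow_mul_rootProd_sub_rootProd_eq_one hα hβ hab 0 hr₀
  rw [hr, C_neg, C_1, neg_one_mul, neg_sub] at h
  exact ⟨_, _, h⟩

end AffineSubstitution

lemma frequently_transcendental (z : ℂ) : ∃ᶠ x in 𝓝 z, Transcendental ℚ x :=
  mem_closure_iff_frequently.1 ((Algebraic.countable ℚ ℂ).dense_compl ℝ z)

namespace IsTreePassport

variable {ι κ : Type*} [Fintype ι] [Fintype κ] {n : ℕ} {α : ι → ℕ} {β : κ → ℕ}

lemma exists_isTransversal_sub_eq_X [DecidableEq ι] [DecidableEq κ] {K : Type*} [Field K]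
    [CharZero K] (h : IsTreePassport (n + 1) α β) {i₀ : ι} (hi₀ : α i₀ = 1) {j₀ : κ}
    (hj₀ : 2 ≤ β j₀) {a : {i // i ≠ i₀} → K} {b : κ → K}
    (hab : rootProd Finset.univ (fun i : {i // i ≠ i₀} => α i) a -
      rootProd Finset.univ (Function.update β j₀ (β j₀ - 1)) b = 1) :
    ∃ (a : ι → K) (b : κ → K), rootProd Finset.univ α a - rootProd Finset.univ β b = X ∧
      IsTransversal α a b j₀ ∧ b j₀ = 0 := by
  have h' := h.prune hi₀ hj₀
  obtain ⟨a, b, hab, hb₀⟩ := exists_sub_eq_one_and_eq_zero h'.left_sum h'.right_sum hab j₀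
  obtain ⟨ha, hb, hne⟩ := Sum.elim_injective.1 (h'.injective_elim hab)
  set a' : ι → K := Function.extend Subtype.val a fun _ => 0
  have ha'₀ : a' i₀ = 0 := Function.extend_apply' _ _ _ (by simp)
  have ha' (i : ι) (hi : i ≠ i₀) : a' i = a ⟨i, hi⟩ :=
    Subtype.val_injective.extend_apply _ _ ⟨i, hi⟩
  have ha'ne (i : ι) (hi : i ≠ i₀) (j : κ) : a' i ≠ b j := ha' i hi ▸ hne ⟨i, hi⟩ j
  refine ⟨a', b, ?_, ⟨fun i i' hii' => ?_, hb, fun i j hij => ?_⟩, hb₀⟩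
  · rw [rootProd_extend hi₀, rootProd_eq_X_sub_C_mul (h.right_pos j₀) b, hb₀, ← mul_sub, hab]
    simp
  · by_cases hi : i = i₀ <;> by_cases hi' : i' = i₀
    · rw [hi, hi']
    · exact absurd (by rw [← hii', hi, ha'₀, hb₀]) (ha'ne i' hi' j₀)
    · exact absurd (by rw [hii', hi', ha'₀, hb₀]) (ha'ne i hi j₀)
    · rw [ha' i hi, ha' i' hi'] at hii'
      exact congrArg Subtype.val (ha hii')
  · obtain rfl : i = i₀ := by_contra fun hi => ha'ne i hi j hij
    exact ⟨hi₀, hb (by rw [← hij, ha'₀, hb₀])⟩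

lemma exists_sub_eq_one_of_isTransversal (h : IsTreePassport n α β) (hn : 2 ≤ n) {a : ι → ℂ}
    {b : κ → ℂ} (hX : rootProd Finset.univ α a - rootProd Finset.univ β b = X) {j₀ : κ}
    (hab : IsTransversal α a b j₀) (hb₀ : b j₀ = 0) :
    ∃ (a : ι → ℂ) (b : κ → ℂ), rootProd Finset.univ α a - rootProd Finset.univ β b = 1 := by
  classical
  obtain ⟨s, t, -, ht, hst⟩ :=
    h.exists_deformation hab (π := id) (α' := α) (fun i => by simp [Finset.sum_filter]) hX
  have htne : ∀ᶠ x in 𝓝 (0, b j₀), ∀ j, j ≠ j₀ → t x j ≠ 0 :=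
    eventually_all.2 fun j => by
      by_cases hj : j = j₀
      · simp [hj]
      · exact ((tendsto_pi_nhds.1 ht j).eventually_ne (hb₀ ▸ hab.right_injective.ne hj)).mono
          fun _ hx _ => hx
  have hembed : Tendsto (fun z : ℂ => ((0 : ι → ℂ), z)) (𝓝 (b j₀)) (𝓝 (0, b j₀)) :=
    (by fun_prop : Continuous _).tendsto _
  obtain ⟨z, hz, hzne, hzj₀, hzX⟩ := ((frequently_transcendental (b j₀)).and_eventually
    (hembed.eventually (htne.and hst))).exists
  rw [Function.comp_id, add_zero] at hzX
  have htrans : Transcendental ℚ (t (0, z) j₀) := by rwa [hzj₀]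
  refine h.exists_sub_eq_one_of_sub_eq_X hn hzX ?_ (F := ℚ) (m := .inr j₀)
    fun hint => htrans hint.isAlgebraic
  have heval : (rootProd Finset.univ α (s (0, z))).eval 0 =
      (rootProd Finset.univ β (t (0, z))).eval 0 := by
    simpa [sub_eq_zero] using congrArg (eval 0) hzX
  rw [heval, Ne, ← IsRoot.def, isRoot_rootProd_iff _ _ h.right_pos]
  rintro ⟨j, -, hj⟩
  rcases eq_or_ne j j₀ with rfl | hjj₀
  · exact htrans (hj ▸ isAlgebraic_zero)
  · exact hzne j hjj₀ hj

end IsTreePassport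

theorem IsTreePassport.exists_sub_eq_one.{u} {ι κ : Type u} [Fintype ι] [Fintype κ] {n : ℕ}
    {α : ι → ℕ} {β : κ → ℕ} (h : IsTreePassport n α β) :
    ∃ (a : ι → ℂ) (b : κ → ℂ), rootProd Finset.univ α a - rootProd Finset.univ β b = 1 := by
  classical
  induction n, h.one_le using Nat.le_induction generalizing ι κ with
  | base =>
    refine ⟨fun _ => 0, fun _ => 1, ?_⟩
    simp [rootProd, Finset.prod_pow_eq_pow_sum, h.left_sum, h.right_sum]
  | succ n hn ih =>
    wlog hα : ∃ i, α i = 1 generalizing ι κ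
    · obtain ⟨b, a, hba⟩ := this h.symm
        (h.exists_left_eq_one_or_exists_right_eq_one.resolve_left hα)
      exact exists_sub_eq_one_symm n.succ_ne_zero h.right_sum h.left_sum hba
    obtain ⟨i₀, hi₀⟩ := hα
    obtain ⟨j₀, hj₀⟩ := h.exists_two_le_right (Nat.succ_le_succ hn) hi₀
    obtain ⟨a, b, hab⟩ := ih (h.prune hi₀ hj₀)
    obtain ⟨a, b, hX, htrans, hb₀⟩ := h.exists_isTransversal_sub_eq_X hi₀ hj₀ hab
    exact h.exists_sub_eq_one_of_isTransversal (Nat.succ_le_succ hn) hX htrans hb₀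

end TreePassport

section MergeAndSplit

open Filter Topology

lemma exists_isTreePassport_sum_fiber {ι κ : Type*} [Fintype ι] [Fintype κ] {n : ℕ} {α : ι → ℕ}
    {β : κ → ℕ} (hα : ∀ i, 0 < α i) (hβ : ∀ j, 0 < β j) (hαsum : ∑ i, α i = n)
    (hβsum : ∑ j, β j = n) (hcard : n + 1 ≤ Fintype.card ι + Fintype.card κ) :
    ∃ (r : ℕ) (π : ι → Fin r), IsTreePassport n (fun l => ∑ i with π i = l, α i) β := by
  have hκ : Fintype.card κ ≤ n := by
    have := sum_pred_add_card Finset.univ hβ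
    rw [hβsum, Finset.card_univ] at this
    omega
  obtain ⟨r, hr⟩ := Nat.exists_eq_add_of_le hκ
  obtain ⟨e⟩ := Function.Embedding.nonempty_of_card_le (α := Fin (r + 1)) (β := ι)
    (by rw [Fintype.card_fin]; omega)
  refine ⟨r + 1, Function.invFun e, fun l => ?_, hβ, ?_, hβsum, ?_⟩
  · obtain ⟨i, hi⟩ := Function.invFun_surjective e.injective l
    exact Finset.sum_pos (fun i _ => hα i) ⟨i, by simpa using hi⟩
  · rw [← hαsum, Finset.sum_fiberwise]
  · rw [Fintype.card_fin]
    omega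

lemma eventually_ne_of_tendsto {X Y : Type*} [TopologicalSpace Y] [T2Space Y] {l : Filter X}
    {f g : X → Y} {y z : Y} (hf : Tendsto f l (𝓝 y)) (hg : Tendsto g l (𝓝 z)) (hyz : y ≠ z) :
    ∀ᶠ x in l, f x ≠ g x :=
  (hf.prodMk_nhds hg).eventually (isClosed_diagonal.isOpen_compl.eventually_mem hyz)

lemma eventually_injective_of_tendsto {X Y ι : Type*} [Finite ι] [TopologicalSpace Y] [T2Space Y]
    {l : Filter X} {f : X → ι → Y} {y : ι → Y} (hf : Tendsto f l (𝓝 y))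
    (hy : Function.Injective y) :
    ∀ᶠ x in l, Function.Injective (f x) := by
  refine eventually_all.2 fun i => eventually_all.2 fun i' => ?_
  by_cases hii' : i = i'
  · simp [hii']
  · filter_upwards [eventually_ne_of_tendsto (tendsto_pi_nhds.1 hf i) (tendsto_pi_nhds.1 hf i')
      (hy.ne hii')] with x hx hfx using absurd hfx hx

lemma eventually_injective_comp_add_smul {𝕜 ι ι' : Type*} [NontriviallyNormedField 𝕜] [Finite ι']
    {s : 𝕜 → ι → 𝕜} {a : ι → 𝕜} {c : ι' → 𝕜} (hs : Tendsto s (𝓝 0) (𝓝 a))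
    (ha : Function.Injective a) (hc : Function.Injective c) (π : ι' → ι) :
    ∀ᶠ u in 𝓝[≠] 0, Function.Injective (s u ∘ π + u • c) := by
  have htendsto (k : ι') : Tendsto (fun u => (s u ∘ π + u • c) k) (𝓝[≠] 0) (𝓝 (a (π k))) := by
    simpa using ((tendsto_pi_nhds.1 hs (π k)).add (tendsto_id.mul_const (c k))).mono_left
      nhdsWithin_le_nhds
  refine eventually_all.2 fun k => eventually_all.2 fun k' => ?_
  by_cases hπ : π k = π k'
  · filter_upwards [self_mem_nhdsWithin] with u hu hkk'
    exact hc (mul_left_cancel₀ hu (by simpa [hπ] using hkk'))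
  · filter_upwards [eventually_ne_of_tendsto (htendsto k) (htendsto k') (ha.ne hπ)] with u hu hkk'
      using absurd hkk' hu

theorem IsTreePassport.exists_injective_sub_eq_one.{u, v} {ι κ : Type u} {ι' : Type v} [Fintype ι]
    [Fintype ι'] [Fintype κ] [DecidableEq ι] {n : ℕ} {α : ι → ℕ} {α' : ι' → ℕ} {β : κ → ℕ}
    {π : ι' → ι} (h : IsTreePassport n α β) (hπ : ∀ i, ∑ k with π k = i, α' k = α i) :
    ∃ (a : ι' → ℂ) (b : κ → ℂ), Function.Injective a ∧ Function.Injective b ∧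
      rootProd Finset.univ α' a - rootProd Finset.univ β b = 1 := by
  obtain ⟨a, b, hab⟩ := h.exists_sub_eq_one
  obtain ⟨ha, hb, hne⟩ := Sum.elim_injective.1 (h.injective_elim hab)
  obtain ⟨j₀, -⟩ : (Finset.univ : Finset κ).Nonempty :=
    Finset.nonempty_of_sum_ne_zero (h.right_sum ▸ Nat.one_le_iff_ne_zero.1 h.one_le)
  obtain ⟨s, t, hs, ht, hst⟩ :=
    h.exists_deformation (j₀ := j₀) ⟨ha, hb, fun i j hij => absurd hij (hne i j)⟩ hπ hab
  let c (k : ι') : ℂ := (Fintype.equivFin ι' k : ℕ)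
  have hc : Function.Injective c :=
    Nat.cast_injective.comp (Fin.val_injective.comp (Fintype.equivFin ι').injective)
  have hpath : Tendsto (fun u : ℂ => (u • c, b j₀)) (𝓝 0) (𝓝 (0, b j₀)) := by
    have : Continuous fun u : ℂ => (u • c, b j₀) := by fun_prop
    simpa using this.tendsto 0
  obtain ⟨u, hu_left, hu_right, -, hu⟩ :=
    ((eventually_injective_comp_add_smul (hs.comp hpath) ha hc π).and
      (((eventually_injective_of_tendsto (ht.comp hpath) hb).and
        (hpath.eventually hst)).filter_mono nhdsWithin_le_nhds)).exists
  exact ⟨_, _, hu_left, hu_right, hu⟩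

end MergeAndSplit

/-- If `p + q ≥ n + 1` then there exist coprime monic `P, Q` with factorization
patterns `α, β` whose difference is a nonzero constant. -/
theorem stmt8 (n p q : ℕ) (hn : 1 ≤ n)
    (α : Fin p → ℕ) (β : Fin q → ℕ)
    (hα : ∀ i, 0 < α i) (hβ : ∀ j, 0 < β j)
    (hαsum : ∑ i, α i = n) (hβsum : ∑ j, β j = n)
    (hpq : n + 1 ≤ p + q) :
    ∃ (P Q : ℂ[X]) (a : Fin p → ℂ) (b : Fin q → ℂ),
      Function.Injective a ∧ Function.Injective b ∧
      P = ∏ i, (X - C (a i)) ^ α i ∧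
      Q = ∏ j, (X - C (b j)) ^ β j ∧
      IsCoprime P Q ∧
      ∃ c : ℂ, c ≠ 0 ∧ P - Q = C c := by
  obtain ⟨r, π, h⟩ := exists_isTreePassport_sum_fiber hα hβ hαsum hβsum (by simpa using hpq)
  obtain ⟨a, b, ha, hb, hab⟩ := h.exists_injective_sub_eq_one (π := π) fun _ => rfl
  exact ⟨rootProd Finset.univ α a, rootProd Finset.univ β b, a, b, ha, hb, rfl, rfl,
    ⟨1, -1, by linear_combination hab⟩, 1, one_ne_zero, hab⟩
end

section
/- Let n ≥ 1 and k ≥ 1, let y_1, …, y_k be pairwise distinct complex numbers, and let λ_1, …, λ_k be partitions of n, where λ_i has p_i parts. Then the following are equivalent: (i) there exists a monic polynomial T ∈ ℂ[X] of degree n such that for each i = 1, …, k the multiset of multiplicities of the distinct complex roots of T − y_i equals the multiset of parts of λ_i, and every complex root of the derivative T′ is a root of the product ∏_{i=1}^k (T − y_i) (i.e., every finite critical value of T lies in {y_1, …, y_k}); (ii) Σ_{i=1}^k p_i = (k − 1)·n + 1 (equivalently, Σ_{i=1}^k (n − p_i) = n − 1). -/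
open Polynomial

/-!
Counting the critical points of `T` fibre by fibre gives the Riemann–Hurwitz formula, and hence
the necessity of the condition. For its sufficiency, one looks for points `a i j` and a scalar `t`
such that `∏ j, (X - a i j) ^ m i j + y i * t ^ n` does not depend on `i` and vanishes at `0`.
Requiring that these polynomials share the derivative `n * ∏ i, ∏ j, (X - a i j) ^ (m i j - 1)`
leaves, after division by the factor common to both sides, `p_i - 1` equations for each `i`;
together with the `k` equations for the constant coefficients these are `∑ p_i` equations in
`∑ p_i + 1` unknowns, all of them satisfied at the origin, so by Krull's height theorem there is a
solution other than the origin. If `t = 0`, the Riemann–Hurwitz formula shows that the common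
polynomial has a single root, which is `0`, so that all `a i j` vanish as well, a contradiction.
Hence `t ≠ 0`, and rescaling makes `t = 1`. The Riemann–Hurwitz formula finally shows that for
fixed `i` the points `a i j` are distinct.
-/

section Dimension

variable {K σ ι : Type*} [Field K] [IsAlgClosed K] [Finite σ] [Finite ι]

theorem height_vanishingIdeal_singleton_le_ncard {S : Set (MvPolynomial σ K)} (hS : S.Finite)
    {x : σ → K} (hx : MvPolynomial.zeroLocus K (Ideal.span S) = {x}) :
    (MvPolynomial.vanishingIdeal K {x}).height ≤ S.ncard := by
  have hrad : MvPolynomial.vanishingIdeal K {x} = (Ideal.span S).radical := by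
    rw [← hx, MvPolynomial.vanishingIdeal_zeroLocus_eq_radical]
  have hprime : (MvPolynomial.vanishingIdeal K {x}).IsPrime :=
    (MvPolynomial.isMaximal_iff_eq_vanishingIdeal_singleton.2 ⟨x, rfl⟩).isPrime
  refine Ideal.height_le_card_of_mem_minimalPrimes_span hS ?_
  rw [← Ideal.radical_minimalPrimes, ← hrad, Ideal.minimalPrimes_eq_subsingleton_self]
  exact Set.mem_singleton _

theorem exists_height_vanishingIdeal_singleton_eq_card :
    ∃ x : σ → K, (MvPolynomial.vanishingIdeal K {x}).height = Nat.card σ := by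
  have hdim : ringKrullDim (MvPolynomial σ K) = (Nat.card σ : ℕ∞) := by
    simp [MvPolynomial.ringKrullDim_of_isNoetherianRing]
  have : FiniteRingKrullDim (MvPolynomial σ K) :=
    finiteRingKrullDim_iff_ne_bot_and_top.2
      ⟨by simp [hdim], by rw [hdim]; exact mod_cast ENat.natCast_ne_top _⟩
  obtain ⟨M, hM, hheight⟩ := Ideal.exists_isMaximal_height (R := MvPolynomial σ K)
  obtain ⟨x, rfl⟩ := MvPolynomial.isMaximal_iff_eq_vanishingIdeal_singleton.1 hM
  exact ⟨x, WithBot.coe_inj.1 (hheight.trans hdim)⟩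

theorem exists_ne_zero_forall_eval_eq_zero (hcard : Nat.card ι < Nat.card σ)
    (f : ι → MvPolynomial σ K) (hf : ∀ i, MvPolynomial.eval 0 (f i) = 0) :
    ∃ x ≠ 0, ∀ i, MvPolynomial.eval x (f i) = 0 := by
  by_contra! hne
  obtain ⟨x, hx⟩ := exists_height_vanishingIdeal_singleton_eq_card (K := K) (σ := σ)
  -- We only know that some point `x` has height `card σ`, so move the zero of the system there.
  let g : ι → MvPolynomial σ K := fun i ↦
    MvPolynomial.bind₁ (fun s ↦ MvPolynomial.X s - MvPolynomial.C (x s)) (f i)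
  have aeval_g (z : σ → K) (i : ι) :
      MvPolynomial.aeval z (g i) = MvPolynomial.eval (z - x) (f i) := by
    simp [g, MvPolynomial.aeval_bind₁, MvPolynomial.aeval_eq_eval, Pi.sub_def]
  have zeroLocus_g : MvPolynomial.zeroLocus K (Ideal.span (Set.range g)) = {x} := by
    ext z
    simp only [MvPolynomial.zeroLocus_span, Set.forall_mem_range, aeval_g, Set.mem_ofPred_eq,
      Set.mem_singleton_iff]
    refine ⟨fun hz ↦ ?_, fun hz i ↦ by rw [hz, sub_self, hf]⟩
    by_contra hzx
    obtain ⟨i, hi⟩ := hne (z - x) (sub_ne_zero.2 hzx)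
    exact hi (hz i)
  have hle := height_vanishingIdeal_singleton_le_ncard (Set.finite_range g) zeroLocus_g
  rw [hx, Nat.cast_le] at hle
  exact absurd (hle.trans (Finite.card_range_le g)) hcard.not_ge

end Dimension

section RiemannHurwitz

variable {K : Type*} [Field K] [DecidableEq K]

theorem sum_rootMultiplicity_derivative_fiber {T : K[X]} (hT : T.natDegree ≠ 0) (y : K) :
    ∑ x ∈ (derivative T).roots.toFinset with T.eval x = y, rootMultiplicity x (derivative T) =
      ∑ x ∈ (T - C y).roots.toFinset, rootMultiplicity x (derivative T) := by
  have hne : T - C y ≠ 0 := ne_zero_of_natDegree_gt (n := 0) (by rw [natDegree_sub_C]; lia)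
  refine Finset.sum_subset (fun x hx ↦ ?_) fun x hx hx' ↦ ?_
  · simpa [hne, sub_eq_zero] using (Finset.mem_filter.1 hx).2
  · have hy : T.eval x = y := by simpa [hne, sub_eq_zero] using hx
    rw [← count_roots, Multiset.count_eq_zero]
    simpa only [Finset.mem_filter, Multiset.mem_toFinset, hy, and_true] using hx'

variable [CharZero K]

theorem sum_rootMultiplicity_derivative_add_card_roots_toFinset {P : K[X]} (hP : P.Splits) :
    ∑ x ∈ P.roots.toFinset, rootMultiplicity x (derivative P) + P.roots.toFinset.card =
      P.natDegree := by
  rw [Finset.card_eq_sum_ones, ← Finset.sum_add_distrib, hP.natDegree_eq_card_roots,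
    ← Multiset.toFinset_sum_count_eq]
  refine Finset.sum_congr rfl fun x hx ↦ ?_
  have hmem : x ∈ P.roots := Multiset.mem_toFinset.1 hx
  have hpos : 0 < P.roots.count x := Multiset.count_pos.2 hmem
  rw [count_roots] at hpos ⊢
  rw [derivative_rootMultiplicity_of_root (isRoot_of_mem_roots hmem), Nat.sub_add_cancel hpos]

/-- The Riemann–Hurwitz formula for the covering `T : ℙ¹ → ℙ¹`, whose ramification at `∞`
contributes `T.natDegree - 1`. -/
theorem sum_card_roots_toFinset_add_natDegree [IsAlgClosed K] {T : K[X]} (hT : T.natDegree ≠ 0)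
    {s : Finset K} (hs : ∀ x, (derivative T).eval x = 0 → T.eval x ∈ s) :
    ∑ y ∈ s, (T - C y).roots.toFinset.card + T.natDegree = s.card * T.natDegree + 1 := by
  have hfiber (y : K) :
      ∑ x ∈ (derivative T).roots.toFinset with T.eval x = y, rootMultiplicity x (derivative T) +
        (T - C y).roots.toFinset.card = T.natDegree := by
    rw [sum_rootMultiplicity_derivative_fiber hT]
    simpa using sum_rootMultiplicity_derivative_add_card_roots_toFinset
      (IsAlgClosed.splits (T - C y))
  have hderiv :
      ∑ y ∈ s, ∑ x ∈ (derivative T).roots.toFinset with T.eval x = y,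
        rootMultiplicity x (derivative T) = T.natDegree - 1 := by
    rw [Finset.sum_fiberwise_of_maps_to fun x hx ↦
      hs x (isRoot_of_mem_roots (Multiset.mem_toFinset.1 hx))]
    simp_rw [← count_roots]
    rw [Multiset.toFinset_sum_count_eq, IsAlgClosed.card_roots_eq_natDegree, natDegree_derivative]
  have htotal := Finset.sum_congr rfl fun y (_ : y ∈ s) ↦ hfiber y
  rw [Finset.sum_add_distrib, hderiv, Finset.sum_const, smul_eq_mul] at htotal
  lia

theorem sum_univ_card_roots_toFinset_add_natDegree [IsAlgClosed K] {ι : Type*} [Fintype ι]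
    {T : K[X]} (hT : T.natDegree ≠ 0) {y : ι → K} (hy : Function.Injective y)
    (hcrit : ∀ x, (derivative T).eval x = 0 → ∃ i, T.eval x = y i) :
    ∑ i, (T - C (y i)).roots.toFinset.card + T.natDegree = Fintype.card ι * T.natDegree + 1 := by
  have hcount := sum_card_roots_toFinset_add_natDegree hT (s := Finset.univ.image y) fun x hx ↦ by
    simpa [eq_comm] using hcrit x hx
  rwa [Finset.sum_image hy.injOn, Finset.card_image_of_injective _ hy, Finset.card_univ] at hcount

end RiemannHurwitz

section RootProduct

variable {A B K J : Type*} [CommRing A] [CommRing B] [Field K] [Fintype J]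

/-- The polynomial `∏ j, (X - a j) ^ m j`. The points `a j` need not be distinct, so `m j` is only
a lower bound for the multiplicity of the root `a j`. -/
noncomputable def rootProduct (m : J → ℕ) (a : J → A) : A[X] :=
  ∏ j, (X - C (a j)) ^ m j

theorem monic_rootProduct (m : J → ℕ) (a : J → A) : (rootProduct m a).Monic :=
  monic_prod_of_monic _ _ fun _ _ ↦ (monic_X_sub_C _).pow _

theorem natDegree_rootProduct [Nontrivial A] (m : J → ℕ) (a : J → A) :
    (rootProduct m a).natDegree = ∑ j, m j := by
  rw [rootProduct, natDegree_prod_of_monic _ _ fun _ _ ↦ (monic_X_sub_C _).pow _]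
  simp [(monic_X_sub_C _).natDegree_pow]

theorem map_rootProduct (φ : A →+* B) (m : J → ℕ) (a : J → A) :
    (rootProduct m a).map φ = rootProduct m (fun j ↦ φ (a j)) := by
  simp [rootProduct, Polynomial.map_prod]

theorem rootProduct_zero (m : J → ℕ) : rootProduct m (0 : J → A) = X ^ ∑ j, m j := by
  simp [rootProduct, Finset.prod_pow_eq_pow_sum]

theorem rootProduct_dvd_rootProduct {m m' : J → ℕ} (h : m ≤ m') (a : J → A) :
    rootProduct m a ∣ rootProduct m' a :=
  Finset.prod_dvd_prod_of_dvd _ _ fun j _ ↦ pow_dvd_pow _ (h j)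

theorem derivative_rootProduct [DecidableEq J] {m : J → ℕ} (hm : ∀ j, 0 < m j) (a : J → A) :
    derivative (rootProduct m a) =
      rootProduct (m - 1) a * ∑ j, m j • ∏ j' ∈ Finset.univ.erase j, (X - C (a j')) := by
  rw [rootProduct, derivative_prod_finset, Finset.mul_sum]
  refine Finset.sum_congr rfl fun j _ ↦ ?_
  have hsplit : ∏ j' ∈ Finset.univ.erase j, (X - C (a j')) ^ m j' =
      (∏ j' ∈ Finset.univ.erase j, (X - C (a j')) ^ (m j' - 1)) *
        ∏ j' ∈ Finset.univ.erase j, (X - C (a j')) := by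
    rw [← Finset.prod_mul_distrib]
    exact Finset.prod_congr rfl fun j' _ ↦ (pow_sub_one_mul (hm j').ne' _).symm
  rw [hsplit, derivative_X_sub_C_pow, map_natCast, nsmul_eq_mul, rootProduct,
    ← Finset.mul_prod_erase _ _ (Finset.mem_univ j)]
  simp only [Pi.sub_apply, Pi.one_apply]
  ring

theorem rootProduct_comp_C_mul_X {t : K} (ht : t ≠ 0) (m : J → ℕ) (a : J → K) :
    (rootProduct m a).comp (C t * X) =
      C (t ^ ∑ j, m j) * rootProduct m (fun j ↦ a j / t) := by
  have hfactor (j : J) : C t * X - C (a j) = C t * (X - C (a j / t)) := by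
    rw [mul_sub, ← C_mul, mul_div_cancel₀ _ ht]
  simp only [rootProduct, prod_comp, pow_comp, sub_comp, X_comp, C_comp, hfactor, mul_pow,
    Finset.prod_mul_distrib, Finset.prod_pow_eq_pow_sum, C_pow]

theorem mem_roots_rootProduct {m : J → ℕ} (hm : ∀ j, 0 < m j) {a : J → K} {x : K} :
    x ∈ (rootProduct m a).roots ↔ ∃ j, a j = x := by
  rw [mem_roots (monic_rootProduct m a).ne_zero]
  simp [rootProduct, eval_prod, Finset.prod_eq_zero_iff, sub_eq_zero, (hm _).ne', eq_comm (a := x)]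

variable [DecidableEq K]

theorem roots_toFinset_rootProduct {m : J → ℕ} (hm : ∀ j, 0 < m j) (a : J → K) :
    (rootProduct m a).roots.toFinset = Finset.univ.image a := by
  ext x
  simp [-mem_roots', mem_roots_rootProduct hm]

theorem count_roots_rootProduct (m : J → ℕ) {a : J → K} (ha : Function.Injective a) (j : J) :
    (rootProduct m a).roots.count (a j) = m j := by
  classical
  rw [rootProduct, roots_prod _ _ (monic_rootProduct m a).ne_zero, Multiset.count_bind]
  simp [Multiset.count_nsmul, Multiset.count_singleton, ha.eq_iff, Finset.sum_map_val]

theorem map_count_dedup_roots_rootProduct {m : J → ℕ} (hm : ∀ j, 0 < m j) {a : J → K}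
    (ha : Function.Injective a) :
    (rootProduct m a).roots.dedup.map (fun z ↦ (rootProduct m a).roots.count z) =
      Finset.univ.val.map m := by
  have hdedup : (rootProduct m a).roots.dedup = Finset.univ.val.map a := by
    rw [← Multiset.toFinset_val, roots_toFinset_rootProduct hm,
      Finset.image_val_of_injOn ha.injOn]
  rw [hdedup, Multiset.map_map]
  exact Multiset.map_congr rfl fun j _ ↦ count_roots_rootProduct m ha j

end RootProduct

section Passport

variable {A B ι : Type*} [CommRing A] [CommRing B] [Fintype ι] {J : ι → Type*}
  [∀ i, Fintype (J i)] {m : ∀ i, J i → ℕ} {n : ℕ}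

/-- A *planar passport* of degree `n`: a family `m i` of partitions of `n`, with parts indexed by
`J i`, satisfying the Riemann–Hurwitz count for a degree `n` polynomial. The count is written as
`∑ p_i + n = k * n + 1` to avoid truncated subtraction. -/
structure IsPlanarPassport (m : ∀ i, J i → ℕ) (n : ℕ) : Prop where
  pos : ∀ i j, 0 < m i j
  sum_eq : ∀ i, ∑ j, m i j = n
  card_add : ∑ i, Fintype.card (J i) + n = Fintype.card ι * n + 1

namespace IsPlanarPassport

theorem sum_sub_one_add_card (h : IsPlanarPassport m n) (i : ι) :
    ∑ j, (m i j - 1) + Fintype.card (J i) = n := by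
  rw [← h.sum_eq i, ← Finset.card_univ, Finset.card_eq_sum_ones, ← Finset.sum_add_distrib]
  exact Finset.sum_congr rfl fun j _ ↦ Nat.sub_add_cancel (h.pos i j)

theorem sum_sum_sub_one (h : IsPlanarPassport m n) : ∑ i, ∑ j, (m i j - 1) + 1 = n := by
  have htotal := Finset.sum_congr rfl fun i (_ : i ∈ Finset.univ) ↦ h.sum_sub_one_add_card i
  rw [Finset.sum_add_distrib, Finset.sum_const, Finset.card_univ, smul_eq_mul] at htotal
  have := h.card_add
  lia

theorem ne_zero (h : IsPlanarPassport m n) : n ≠ 0 := by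
  have := h.sum_sum_sub_one
  lia

variable [DecidableEq ι]

theorem sum_erase_sum_sub_one (h : IsPlanarPassport m n) (i : ι) :
    ∑ i' ∈ Finset.univ.erase i, ∑ j, (m i' j - 1) + 1 = Fintype.card (J i) := by
  have htotal := h.sum_sum_sub_one
  rw [← Finset.add_sum_erase _ _ (Finset.mem_univ i)] at htotal
  have := h.sum_sub_one_add_card i
  lia

end IsPlanarPassport

variable [DecidableEq ι] [∀ i, DecidableEq (J i)]

/-- For `P i = rootProduct (m i) (a i)` of degree `n` and `D i = rootProduct (m i - 1) (a i)`, this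
is the quotient of `derivative (P i) - n * ∏ k, D k` by its factor `D i`. It vanishes for all `i`
iff the `P i` share the derivative whose roots are the `a i j` with multiplicities `m i j - 1`. -/
noncomputable def criticalDefect (m : ∀ i, J i → ℕ) (a : ∀ i, J i → A) (i : ι) : A[X] :=
  ∑ j, m i j • (∏ j' ∈ Finset.univ.erase j, (X - C (a i j')) -
    ∏ i' ∈ Finset.univ.erase i, rootProduct (m i' - 1) (a i'))

theorem map_criticalDefect (φ : A →+* B) (m : ∀ i, J i → ℕ) (a : ∀ i, J i → A) (i : ι) :
    (criticalDefect m a i).map φ = criticalDefect m (fun i j ↦ φ (a i j)) i := by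
  simp [criticalDefect, Polynomial.map_sum, Polynomial.map_prod, map_rootProduct]

theorem derivative_rootProduct_eq_add_criticalDefect {i : ι} (hm : ∀ j, 0 < m i j)
    (a : ∀ i, J i → A) :
    derivative (rootProduct (m i) (a i)) =
      (∑ j, m i j) • ∏ i', rootProduct (m i' - 1) (a i') +
        rootProduct (m i - 1) (a i) * criticalDefect m a i := by
  rw [derivative_rootProduct hm, criticalDefect, ← Finset.mul_prod_erase _ _ (Finset.mem_univ i)]
  simp only [smul_sub, Finset.sum_sub_distrib, ← Finset.sum_smul]
  rw [mul_sub, mul_smul_comm, add_sub_cancel]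

theorem IsPlanarPassport.degree_criticalDefect_lt [Nontrivial A] (h : IsPlanarPassport m n)
    (a : ∀ i, J i → A) (i : ι) :
    (criticalDefect m a i).degree < (Fintype.card (J i) - 1 : ℕ) := by
  rw [← mem_degreeLT]
  refine sum_mem fun j _ ↦ nsmul_mem (mem_degreeLT.2 ?_) _
  have hmonic : (∏ j' ∈ Finset.univ.erase j, (X - C (a i j'))).Monic :=
    monic_prod_of_monic _ _ fun _ _ ↦ monic_X_sub_C _
  have hmonic' : (∏ i' ∈ Finset.univ.erase i, rootProduct (m i' - 1) (a i')).Monic :=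
    monic_prod_of_monic _ _ fun _ _ ↦ monic_rootProduct _ _
  have hdeg : (∏ j' ∈ Finset.univ.erase j, (X - C (a i j'))).degree =
      ((Fintype.card (J i) - 1 : ℕ) : WithBot ℕ) := by
    rw [degree_eq_natDegree hmonic.ne_zero, natDegree_prod_of_monic _ _ fun _ _ ↦ monic_X_sub_C _]
    simp
  have hdeg' : (∏ i' ∈ Finset.univ.erase i, rootProduct (m i' - 1) (a i')).degree =
      ((Fintype.card (J i) - 1 : ℕ) : WithBot ℕ) := by
    rw [degree_eq_natDegree hmonic'.ne_zero,
      natDegree_prod_of_monic _ _ fun _ _ ↦ monic_rootProduct _ _, ← h.sum_erase_sum_sub_one i]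
    simp [natDegree_rootProduct]
  rw [← hdeg]
  exact degree_sub_lt_left (hdeg.trans hdeg'.symm) hmonic.ne_zero (hmonic.trans hmonic'.symm)

theorem IsPlanarPassport.criticalDefect_zero (h : IsPlanarPassport m n) (i : ι) :
    criticalDefect m (0 : ∀ i, J i → A) i = 0 := by
  refine Finset.sum_eq_zero fun j _ ↦ ?_
  simp [rootProduct_zero, Finset.prod_pow_eq_pow_sum, ← h.sum_erase_sum_sub_one i]

/-- The vanishing of this polynomial says that `criticalDefect m a i = 0` and that
`rootProduct (m i) (a i) + y i * t ^ n` vanishes at `0`. The two conditions are packed into the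
coefficients of one polynomial of degree less than `card (J i)`, so that they make up exactly as
many equations as there are points `a i j`. -/
noncomputable def thomEquation (m : ∀ i, J i → ℕ) (n : ℕ) (y : ι → A) (a : ∀ i, J i → A) (t : A)
    (i : ι) : A[X] :=
  C ((rootProduct (m i) (a i)).coeff 0 + y i * t ^ n) + X * criticalDefect m a i

theorem map_thomEquation (φ : A →+* B) (m : ∀ i, J i → ℕ) (n : ℕ) (y : ι → A)
    (a : ∀ i, J i → A) (t : A) (i : ι) :
    (thomEquation m n y a t i).map φ =
      thomEquation m n (fun i ↦ φ (y i)) (fun i j ↦ φ (a i j)) (φ t) i := by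
  simp [thomEquation, map_criticalDefect, ← map_rootProduct]

theorem coeff_zero_thomEquation (m : ∀ i, J i → ℕ) (n : ℕ) (y : ι → A) (a : ∀ i, J i → A) (t : A)
    (i : ι) : (thomEquation m n y a t i).coeff 0 =
      (rootProduct (m i) (a i)).coeff 0 + y i * t ^ n := by
  rw [thomEquation, coeff_add, coeff_C_zero, coeff_X_mul_zero, add_zero]

theorem coeff_succ_thomEquation (m : ∀ i, J i → ℕ) (n : ℕ) (y : ι → A) (a : ∀ i, J i → A) (t : A)
    (i : ι) (e : ℕ) :
    (thomEquation m n y a t i).coeff (e + 1) = (criticalDefect m a i).coeff e := by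
  rw [thomEquation, coeff_add, coeff_C_succ, coeff_X_mul, zero_add]

theorem thomEquation_eq_zero_iff {y : ι → A} {a : ∀ i, J i → A} {t : A} {i : ι} :
    thomEquation m n y a t i = 0 ↔
      (rootProduct (m i) (a i)).coeff 0 + y i * t ^ n = 0 ∧ criticalDefect m a i = 0 := by
  rw [Polynomial.ext_iff, ← Nat.and_forall_add_one, Polynomial.ext_iff]
  simp only [coeff_zero_thomEquation, coeff_succ_thomEquation, coeff_zero]

theorem IsPlanarPassport.degree_thomEquation_lt [Nontrivial A] (h : IsPlanarPassport m n)
    (y : ι → A) (a : ∀ i, J i → A) (t : A) (i : ι) :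
    (thomEquation m n y a t i).degree < Fintype.card (J i) := by
  have hcard := h.sum_erase_sum_sub_one i
  rw [degree_lt_iff_coeff_zero]
  rintro (_ | e) he
  · lia
  · rw [coeff_succ_thomEquation]
    exact (degree_lt_iff_coeff_zero _ _).1 (h.degree_criticalDefect_lt a i) e (by lia)

theorem IsPlanarPassport.thomEquation_zero (h : IsPlanarPassport m n) (y : ι → A) (i : ι) :
    thomEquation m n y (0 : ∀ i, J i → A) 0 i = 0 := by
  refine thomEquation_eq_zero_iff.2 ⟨?_, h.criticalDefect_zero i⟩
  simp [rootProduct_zero, h.sum_eq, coeff_X_pow, h.ne_zero, h.ne_zero.symm]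

theorem IsPlanarPassport.exists_thomEquation_eq_zero {K : Type*} [Field K] [IsAlgClosed K]
    (h : IsPlanarPassport m n) (y : ι → K) :
    ∃ (a : ∀ i, J i → K) (t : K), (t = 0 → a ≠ 0) ∧ ∀ i, thomEquation m n y a t i = 0 := by
  let equation (i : ι) : (MvPolynomial (Option (Σ i, J i)) K)[X] :=
    thomEquation m n (fun i ↦ MvPolynomial.C (y i))
      (fun i j ↦ MvPolynomial.X (some ⟨i, j⟩)) (MvPolynomial.X none) i
  have map_equation (x : Option (Σ i, J i) → K) (i : ι) :
      (equation i).map (MvPolynomial.eval x) =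
        thomEquation m n y (fun i j ↦ x (some ⟨i, j⟩)) (x none) i := by
    simp [equation, map_thomEquation]
  obtain ⟨x, hx, hzero⟩ := exists_ne_zero_forall_eval_eq_zero
    (ι := Σ i, Fin (Fintype.card (J i))) (σ := Option (Σ i, J i)) (by simp)
    (fun s ↦ (equation s.1).coeff s.2) fun s ↦ by
      rw [← coeff_map, map_equation]
      exact congrArg (coeff · s.2) (h.thomEquation_zero y s.1)
  refine ⟨fun i j ↦ x (some ⟨i, j⟩), x none, fun ht ha ↦ hx ?_, fun i ↦ ?_⟩
  · funext s
    rcases s with _ | ⟨i, j⟩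
    · exact ht
    · exact congrFun₂ ha i j
  · rw [← map_equation]
    ext e
    rcases lt_or_ge e (Fintype.card (J i)) with he | he
    · rw [coeff_map]
      exact hzero ⟨i, e, he⟩
    · rw [map_equation]
      exact (degree_lt_iff_coeff_zero _ _).1 (h.degree_thomEquation_lt y _ _ i) e he

end Passport

section Realization

variable {K ι : Type*} [Field K] {J : ι → Type*} [∀ i, Fintype (J i)] {m : ∀ i, J i → ℕ} {n : ℕ}
  {y : ι → K} {a : ∀ i, J i → K} {T : K[X]}

/-- `T` takes the value `y i` at the points `a i j`, with multiplicities `m i j` and nowhere else,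
and has all its finite critical values among the `y i`. As in `rootProduct`, coincidences among the
`a i j` are allowed. -/
structure IsRealization (m : ∀ i, J i → ℕ) (y : ι → K) (a : ∀ i, J i → K) (T : K[X]) : Prop where
  sub_eq : ∀ i, T - C (y i) = rootProduct (m i) (a i)
  critical : ∀ x, (derivative T).eval x = 0 → ∃ i, T.eval x = y i

namespace IsRealization

theorem natDegree_eq (hT : IsRealization m y a T) (i : ι) : T.natDegree = ∑ j, m i j := by
  rw [← natDegree_sub_C (a := y i), hT.sub_eq, natDegree_rootProduct]

theorem monic [Nonempty ι] (hT : IsRealization m y a T) (hdeg : T.natDegree ≠ 0) : T.Monic := by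
  obtain ⟨i⟩ := ‹Nonempty ι›
  have hlt : (C (y i)).degree < T.degree :=
    degree_C_le.trans_lt (natDegree_pos_iff_degree_pos.1 (Nat.pos_of_ne_zero hdeg))
  rw [Monic, ← leadingCoeff_sub_of_degree_lt hlt, hT.sub_eq]
  exact monic_rootProduct _ _

theorem eval_eq (hT : IsRealization m y a T) (hm : ∀ i j, 0 < m i j) (i : ι) (j : J i) :
    T.eval (a i j) = y i := by
  have hroot : a i j ∈ (T - C (y i)).roots := by
    rw [hT.sub_eq, mem_roots_rootProduct (hm i)]
    exact ⟨j, rfl⟩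
  simpa [sub_eq_zero] using isRoot_of_mem_roots hroot

theorem scale {t : K} (ht : t ≠ 0) (hsum : ∀ i, ∑ j, m i j = n)
    (hT : IsRealization m (fun i ↦ y i * t ^ n) a T) :
    IsRealization m y (fun i j ↦ a i j / t) (C (t ^ n)⁻¹ * T.comp (C t * X)) where
  sub_eq i := by
    have hcomp := congrArg (comp · (C t * X)) (hT.sub_eq i)
    simp only [sub_comp, C_comp, rootProduct_comp_C_mul_X ht, hsum, sub_eq_iff_eq_add] at hcomp
    rw [hcomp, mul_add, ← mul_assoc, ← C_mul, ← C_mul, inv_mul_cancel₀ (pow_ne_zero n ht),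
      mul_comm (y i), inv_mul_cancel_left₀ (pow_ne_zero n ht), C_1, one_mul, add_sub_cancel_right]
  critical x hx := by
    have hx' : (derivative T).eval (t * x) = 0 := by
      simpa [derivative_comp, ht] using hx
    obtain ⟨i, hi⟩ := hT.critical _ hx'
    exact ⟨i, by simp [hi, ht, mul_comm (y i)]⟩

variable [IsAlgClosed K] [CharZero K]

-- By Riemann–Hurwitz, `T` takes its only critical value `0` at a single point.
theorem points_eq_zero (hT : IsRealization m 0 a T) (hm : ∀ i j, 0 < m i j) (hdeg : T.natDegree ≠ 0)
    (hzero : T.eval 0 = 0) : a = 0 := by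
  classical
  have hcount := sum_card_roots_toFinset_add_natDegree hdeg (s := {0}) fun x hx ↦
    let ⟨_, hi⟩ := hT.critical x hx
    Finset.mem_singleton.2 hi
  rw [Finset.sum_singleton, Finset.card_singleton, C_0, sub_zero, one_mul] at hcount
  have hone : T.roots.toFinset.card = 1 := by lia
  have hmem {x : K} (hx : T.eval x = 0) : x ∈ T.roots.toFinset :=
    Multiset.mem_toFinset.2 ((mem_roots (ne_zero_of_natDegree_gt (Nat.pos_of_ne_zero hdeg))).2 hx)
  funext i j
  exact Finset.card_le_one.1 hone.le _ (hmem (hT.eval_eq hm i j)) _ (hmem hzero)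

-- Riemann–Hurwitz forces `T` to take the value `y i` at no fewer than `card (J i)` points.
theorem points_injective [Fintype ι] (hT : IsRealization m y a T) (h : IsPlanarPassport m n)
    (hy : Function.Injective y) (i : ι) : Function.Injective (a i) := by
  classical
  have hdeg : T.natDegree = n := (hT.natDegree_eq i).trans (h.sum_eq i)
  have hcount := sum_univ_card_roots_toFinset_add_natDegree (hdeg.trans_ne h.ne_zero) hy hT.critical
  simp only [hdeg, hT.sub_eq, roots_toFinset_rootProduct (h.pos _)] at hcount
  have hle (i : ι) (_ : i ∈ Finset.univ) : (Finset.univ.image (a i)).card ≤ Fintype.card (J i) :=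
    Finset.card_image_le
  have heq := (Finset.sum_eq_sum_iff_of_le hle).1 (by have := h.card_add; lia) i (Finset.mem_univ i)
  simpa using Finset.card_image_iff.1 heq

end IsRealization

variable [CharZero K] [Fintype ι] [Nonempty ι]

theorem IsPlanarPassport.exists_isRealization_of_thomEquation_eq_zero
    [DecidableEq ι] [∀ i, DecidableEq (J i)] (h : IsPlanarPassport m n) {t : K}
    (hzero : ∀ i, thomEquation m n y a t i = 0) :
    ∃ T, IsRealization m (fun i ↦ y i * t ^ n) a T ∧ T.eval 0 = 0 := by
  obtain ⟨i₀⟩ := ‹Nonempty ι›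
  let S (i : ι) : K[X] := rootProduct (m i) (a i) + C (y i * t ^ n)
  have derivative_S (i : ι) : derivative (S i) = n • ∏ k, rootProduct (m k - 1) (a k) := by
    rw [derivative_add, derivative_C, add_zero,
      derivative_rootProduct_eq_add_criticalDefect (h.pos i),
      (thomEquation_eq_zero_iff.1 (hzero i)).2, mul_zero, add_zero, h.sum_eq]
  have coeff_zero_S (i : ι) : (S i).coeff 0 = 0 := by
    rw [coeff_add, coeff_C_zero, (thomEquation_eq_zero_iff.1 (hzero i)).1]
  have S_eq (i : ι) : S i₀ = S i := by
    rw [← sub_eq_zero, eq_C_of_derivative_eq_zero (p := S i₀ - S i)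
      (by rw [derivative_sub, derivative_S, derivative_S, sub_self])]
    rw [coeff_sub, coeff_zero_S, coeff_zero_S, sub_self, C_0]
  refine ⟨S i₀, ⟨fun i ↦ ?_, fun x hx ↦ ?_⟩, ?_⟩
  · rw [S_eq i, add_sub_cancel_right]
  · obtain ⟨i, hi⟩ : ∃ i, (rootProduct (m i - 1) (a i)).eval x = 0 := by
      simpa [derivative_S, eval_prod, Finset.prod_eq_zero_iff, h.ne_zero] using hx
    have hroot : (rootProduct (m i) (a i)).eval x = 0 :=
      eval_eq_zero_of_dvd_of_eval_eq_zero (rootProduct_dvd_rootProduct tsub_le_self _) hi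
    exact ⟨i, by rw [S_eq i, eval_add, hroot, eval_C, zero_add]⟩
  · rw [← coeff_zero_eq_eval_zero, coeff_zero_S]

theorem IsPlanarPassport.exists_isRealization [IsAlgClosed K] (h : IsPlanarPassport m n)
    (y : ι → K) : ∃ (a : ∀ i, J i → K) (T : K[X]), IsRealization m y a T := by
  classical
  obtain ⟨a, t, hne, hzero⟩ := h.exists_thomEquation_eq_zero y
  obtain ⟨T, hT, hT0⟩ := h.exists_isRealization_of_thomEquation_eq_zero hzero
  have hdeg : T.natDegree ≠ 0 := by
    rw [hT.natDegree_eq (Classical.arbitrary ι), h.sum_eq]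
    exact h.ne_zero
  have ht : t ≠ 0 := by
    rintro rfl
    refine hne rfl (IsRealization.points_eq_zero (T := T) ?_ h.pos hdeg hT0)
    simpa [h.ne_zero, Pi.zero_def] using hT
  exact ⟨_, _, hT.scale ht h.sum_eq⟩

theorem IsPlanarPassport.exists_polynomial [IsAlgClosed K] [DecidableEq K]
    (h : IsPlanarPassport m n) (hy : Function.Injective y) :
    ∃ T : K[X], T.Monic ∧ T.natDegree = n ∧
      (∀ i, (T - C (y i)).roots.dedup.map (fun z ↦ (T - C (y i)).roots.count z) =
        Finset.univ.val.map (m i)) ∧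
      ∀ x, (derivative T).eval x = 0 → ∃ i, T.eval x = y i := by
  obtain ⟨a, T, hT⟩ := h.exists_isRealization y
  have hdeg : T.natDegree = n := (hT.natDegree_eq (Classical.arbitrary ι)).trans (h.sum_eq _)
  refine ⟨T, hT.monic (hdeg.trans_ne h.ne_zero), hdeg, fun i ↦ ?_, hT.critical⟩
  rw [hT.sub_eq, map_count_dedup_roots_rootProduct (h.pos i) (hT.points_injective h hy i)]

end Realization

theorem stmt9_general {K ι : Type*} [Field K] [IsAlgClosed K] [CharZero K] [DecidableEq K]
    [Fintype ι] [Nonempty ι] {n : ℕ} (hn : 1 ≤ n) {y : ι → K} (hy : Function.Injective y)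
    {lam : ι → Multiset ℕ} (hpos : ∀ i, ∀ x ∈ lam i, 0 < x) (hsum : ∀ i, (lam i).sum = n) :
    (∃ T : K[X], T.Monic ∧ T.natDegree = n ∧
        (∀ i, ((T - C (y i)).roots.dedup).map
            (fun z ↦ (T - C (y i)).roots.count z) = lam i) ∧
        (∀ x : K, (derivative T).eval x = 0 → ∃ i, T.eval x = y i)) ↔
      ∑ i, (lam i).card = (Fintype.card ι - 1) * n + 1 := by
  have hcount : ∑ i, (lam i).card = (Fintype.card ι - 1) * n + 1 ↔
      ∑ i, (lam i).card + n = Fintype.card ι * n + 1 := by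
    obtain ⟨k, hk⟩ := Nat.exists_eq_succ_of_ne_zero (Fintype.card_ne_zero (α := ι))
    rw [hk, Nat.succ_sub_one, Nat.succ_mul]
    lia
  rw [hcount]
  constructor
  · rintro ⟨T, -, hdeg, hlam, hcrit⟩
    have hRH := sum_univ_card_roots_toFinset_add_natDegree (by lia : T.natDegree ≠ 0) hy hcrit
    simpa [← hlam, Multiset.card_toFinset, hdeg] using hRH
  · intro hcard
    have hpassport : IsPlanarPassport (fun i (j : lam i) ↦ (j : ℕ)) n :=
      ⟨fun i j ↦ hpos i j Multiset.coe_mem, fun i ↦ by rw [← hsum i, Multiset.sum_eq_sum_coe],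
        by simpa only [Multiset.card_coe] using hcard⟩
    simpa only [Multiset.map_univ_coe] using hpassport.exists_polynomial hy

/-- Thom's realizability theorem: there is a monic degree-`n` polynomial `T`
whose root multiplicities over each `y i` realize the partition `lam i` and
all of whose finite critical values lie among the `y i`, iff
`Σ p_i = (k - 1)·n + 1`. -/
theorem stmt9 (n k : ℕ) (hn : 1 ≤ n) (hk : 1 ≤ k)
    (y : Fin k → ℂ) (hy : Function.Injective y)
    (lam : Fin k → Multiset ℕ)
    (hpos : ∀ i, ∀ x ∈ lam i, 0 < x)
    (hsum : ∀ i, (lam i).sum = n) :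
    (∃ T : ℂ[X], T.Monic ∧ T.natDegree = n ∧
        (∀ i, ((T - C (y i)).roots.dedup).map
            (fun z => (T - C (y i)).roots.count z) = lam i) ∧
        (∀ x : ℂ, (derivative T).eval x = 0 → ∃ i, T.eval x = y i)) ↔
      ∑ i, (lam i).card = (k - 1) * n + 1 := by
  have : Nonempty (Fin k) := ⟨⟨0, hk⟩⟩
  simpa only [Fintype.card_fin] using stmt9_general hn hy hpos hsum
end

section
/- Let m ≥ 1 and d ≥ 1 be integers and let f, g ∈ ℂ[X] be monic polynomials of degree m with f ≠ g. Then deg(f^d − g^d) = deg(f − g) + (d − 1)·m. -/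
open Polynomial

/-! In `f ^ d - g ^ d = (∑ i < d, f ^ i * g ^ (d - 1 - i)) * (f - g)` each of the `d` summands is
monic of degree `(d - 1) * m`, so the sum has leading coefficient `d`. As this is not a zero
divisor, the degrees of the two factors add up. -/

open scoped nonZeroDivisors

section Semiring

variable {R : Type*} [Semiring R] {f g : R[X]} {m : ℕ}

theorem natDegree_geom_sum₂_le (hf : f.natDegree ≤ m) (hg : g.natDegree ≤ m) (d : ℕ) :
    (∑ i ∈ Finset.range d, f ^ i * g ^ (d - 1 - i)).natDegree ≤ (d - 1) * m := by
  refine natDegree_sum_le_of_forall_le _ _ fun i hi ↦ ?_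
  have hexp : i + (d - 1 - i) = d - 1 := by have := Finset.mem_range.mp hi; omega
  calc (f ^ i * g ^ (d - 1 - i)).natDegree
      ≤ i * m + (d - 1 - i) * m :=
        natDegree_mul_le_of_le (natDegree_pow_le_of_le i hf) (natDegree_pow_le_of_le _ hg)
    _ = (d - 1) * m := by rw [← add_mul, hexp]

theorem coeff_pow_mul_pow_of_monic (hf : f.Monic) (hg : g.Monic) (hfm : f.natDegree = m)
    (hgm : g.natDegree = m) (i j : ℕ) : (f ^ i * g ^ j).coeff ((i + j) * m) = 1 := by
  have hdeg : (f ^ i * g ^ j).natDegree = (i + j) * m := by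
    rw [(hf.pow i).natDegree_mul (hg.pow j), hf.natDegree_pow, hg.natDegree_pow, hfm, hgm, add_mul]
  rw [← hdeg]
  exact ((hf.pow i).mul (hg.pow j)).coeff_natDegree

theorem coeff_geom_sum₂_of_monic (hf : f.Monic) (hg : g.Monic) (hfm : f.natDegree = m)
    (hgm : g.natDegree = m) (d : ℕ) :
    (∑ i ∈ Finset.range d, f ^ i * g ^ (d - 1 - i)).coeff ((d - 1) * m) = d := by
  have hterm : ∀ i ∈ Finset.range d, (f ^ i * g ^ (d - 1 - i)).coeff ((d - 1) * m) = 1 := by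
    intro i hi
    have hexp : i + (d - 1 - i) = d - 1 := by have := Finset.mem_range.mp hi; omega
    simpa only [hexp] using coeff_pow_mul_pow_of_monic hf hg hfm hgm i (d - 1 - i)
  rw [finsetSum_coeff, Finset.sum_congr rfl hterm]
  simp

theorem natDegree_geom_sum₂_of_monic (hf : f.Monic) (hg : g.Monic) (hfm : f.natDegree = m)
    (hgm : g.natDegree = m) {d : ℕ} (hd : (d : R) ≠ 0) :
    (∑ i ∈ Finset.range d, f ^ i * g ^ (d - 1 - i)).natDegree = (d - 1) * m :=
  natDegree_eq_of_le_of_coeff_ne_zero (natDegree_geom_sum₂_le hfm.le hgm.le d)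
    (by rwa [coeff_geom_sum₂_of_monic hf hg hfm hgm])

theorem leadingCoeff_geom_sum₂_of_monic (hf : f.Monic) (hg : g.Monic) (hfm : f.natDegree = m)
    (hgm : g.natDegree = m) {d : ℕ} (hd : (d : R) ≠ 0) :
    (∑ i ∈ Finset.range d, f ^ i * g ^ (d - 1 - i)).leadingCoeff = d := by
  rw [leadingCoeff, natDegree_geom_sum₂_of_monic hf hg hfm hgm hd,
    coeff_geom_sum₂_of_monic hf hg hfm hgm]

end Semiring

theorem stmt10_general {R : Type*} [CommRing R] {m d : ℕ} (hd : (d : R) ∈ R⁰) {f g : R[X]}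
    (hf : f.Monic) (hg : g.Monic) (hfm : f.natDegree = m) (hgm : g.natDegree = m) (hne : f ≠ g) :
    (f ^ d - g ^ d).natDegree = (f - g).natDegree + (d - 1) * m := by
  have : Nontrivial R := Nontrivial.of_polynomial_ne hne
  have hd0 : (d : R) ≠ 0 := nonZeroDivisors.ne_zero hd
  have hlead : (∑ i ∈ Finset.range d, f ^ i * g ^ (d - 1 - i)).leadingCoeff *
      (f - g).leadingCoeff ≠ 0 := by
    rw [leadingCoeff_geom_sum₂_of_monic hf hg hfm hgm hd0, Ne,
      mul_left_mem_nonZeroDivisors_eq_zero_iff hd, leadingCoeff_eq_zero, sub_eq_zero]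
    exact hne
  rw [← geom_sum₂_mul, natDegree_mul' hlead, natDegree_geom_sum₂_of_monic hf hg hfm hgm hd0,
    add_comm]

/-- For monic `f, g` of degree `m` with `f ≠ g`,
`deg (f^d - g^d) = deg (f - g) + (d - 1)·m`. -/
theorem stmt10 (m d : ℕ) (hm : 1 ≤ m) (hd : 1 ≤ d)
    (f g : ℂ[X]) (hf : f.Monic) (hg : g.Monic)
    (hfm : f.natDegree = m) (hgm : g.natDegree = m) (hne : f ≠ g) :
    (f ^ d - g ^ d).natDegree = (f - g).natDegree + (d - 1) * m :=
  stmt10_general (mem_nonZeroDivisors_of_ne_zero (Nat.cast_ne_zero.mpr (by omega)))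
    hf hg hfm hgm hne
end

section
/- Define the sequence (a_n) of rational numbers by a_0 = 1 and, for n ≥ 1, a_n = Σ_{m=1}^{n} C(n−1, m−1)·Cat_m, where Cat_m = C(2m, m)/(m+1) is the m-th Catalan number. Let A = Σ_{n≥0} a_n tⁿ be the corresponding formal power series in ℚ[[t]]. Then (1 − t)·A = (1 − t) + t·A² in ℚ[[t]]. -/
/-!
An edge of positive integer weight has generating function `t / (1 - t)`, so weighting the edges of
a plane tree turns the Catalan series `C` into `A = C(t / (1 - t))`: the coefficient of `tⁿ` in
`(t / (1 - t)) ^ m` counts the `(n - 1).choose (m - 1)` ways to distribute the total weight `n` over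
`m` edges. Substituting `t / (1 - t)` into `C = 1 + t C²` and clearing the denominator gives the
equation for `A`.
-/

open PowerSeries

theorem coeff_zero_subst_of_constantCoeff_eq_zero {R : Type*} [CommRing R] {g : R⟦X⟧}
    (hg : constantCoeff g = 0) (f : R⟦X⟧) : coeff 0 (f.subst g) = coeff 0 f := by
  rw [coeff_subst' (.of_constantCoeff_zero' hg), finsum_eq_single _ 0]
  · simp
  · intro m hm
    simp [hg, hm]

section GeomTail

variable (R : Type*) [CommRing R]

/-- The geometric series `t + t² + t³ + ⋯ = t / (1 - t)` without its constant term, the series to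
be substituted for `t`. It is written as a product because `R` need not be a field. -/
noncomputable def geomTail : R⟦X⟧ := X * mk 1

theorem one_sub_X_mul_geomTail : (1 - X) * geomTail R = X := by
  rw [geomTail, mul_left_comm, mul_comm (1 - X), mk_one_mul_one_sub_eq_one, mul_one]

theorem constantCoeff_geomTail : constantCoeff (geomTail R) = 0 := by
  simp [geomTail]

theorem hasSubst_geomTail : HasSubst (geomTail R) :=
  .of_constantCoeff_zero' (constantCoeff_geomTail R)

theorem coeff_succ_geomTail_pow_succ (n m : ℕ) :
    coeff (n + 1) (geomTail R ^ (m + 1)) = (n.choose m : R) := by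
  rw [geomTail, mul_pow, mk_one_pow_eq_mk_choose_add, coeff_X_pow_mul']
  split_ifs with hmn
  · rw [coeff_mk, Nat.add_sub_add_right, Nat.add_sub_cancel' (by lia)]
  · rw [Nat.choose_eq_zero_of_lt (by lia), Nat.cast_zero]

variable {R}

theorem coeff_succ_subst_geomTail (f : R⟦X⟧) (n : ℕ) :
    coeff (n + 1) (f.subst (geomTail R)) =
      ∑ m ∈ Finset.Icc 1 (n + 1), (n.choose (m - 1) : R) * coeff m f := by
  have coeff_pow_zero : coeff (n + 1) (geomTail R ^ 0) = 0 := by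
    simp [coeff_one]
  rw [coeff_subst' (hasSubst_geomTail R),
    finsum_eq_sum_of_support_subset (s := Finset.Icc 1 (n + 1))]
  · refine Finset.sum_congr rfl fun m hm ↦ ?_
    obtain ⟨k, rfl⟩ := Nat.exists_eq_add_of_le' (Finset.mem_Icc.1 hm).1
    rw [coeff_succ_geomTail_pow_succ, smul_eq_mul, mul_comm, Nat.add_sub_cancel]
  · rw [Function.support_subset_iff']
    rintro (_ | k) hk
    · rw [coeff_pow_zero, smul_zero]
    · have hnk : n < k := by simpa using hk
      rw [coeff_succ_geomTail_pow_succ, Nat.choose_eq_zero_of_lt hnk, Nat.cast_zero, smul_zero]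

theorem one_sub_X_mul_subst_geomTail_of_sq_mul_X_add_one {f : R⟦X⟧} (hf : f ^ 2 * X + 1 = f) :
    (1 - X) * f.subst (geomTail R) = (1 - X) + X * f.subst (geomTail R) ^ 2 := by
  have substituted : f.subst (geomTail R) ^ 2 * geomTail R + 1 = f.subst (geomTail R) := by
    simpa only [map_add, map_mul, map_pow, map_one, substAlgHom_X, coe_substAlgHom]
      using congrArg (substAlgHom (R := R) (hasSubst_geomTail R)) hf
  linear_combination -(1 - X) * substituted +
    f.subst (geomTail R) ^ 2 * one_sub_X_mul_geomTail R

end GeomTail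

theorem map_catalanSeries_sq_mul_X_add_one (R : Type*) [CommSemiring R] :
    map (Nat.castRingHom R) catalanSeries ^ 2 * X + 1 = map (Nat.castRingHom R) catalanSeries := by
  simpa only [map_add, map_mul, map_pow, map_one, map_X]
    using congrArg (map (Nat.castRingHom R)) catalanSeries_sq_mul_X_add_one

theorem natCast_catalan_eq_choose_div (K : Type*) [Field K] [CharZero K] (n : ℕ) :
    (catalan n : K) = ((2 * n).choose n : K) / (n + 1) := by
  rw [eq_div_iff n.cast_add_one_ne_zero, mul_comm]
  exact_mod_cast succ_mul_catalan_eq_centralBinom n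

theorem stmt11_general {R : Type*} [CommRing R] (a : ℕ → R) (ha0 : a 0 = 1)
    (ha : ∀ n : ℕ, 1 ≤ n →
      a n = ∑ m ∈ Finset.Icc 1 n, ((n - 1).choose (m - 1) : R) * (catalan m : R)) :
    (1 - X) * mk a = (1 - X) + X * mk a ^ 2 := by
  have mk_a_eq_subst : mk a = (map (Nat.castRingHom R) catalanSeries).subst (geomTail R) := by
    ext (_ | n)
    · rw [coeff_zero_subst_of_constantCoeff_eq_zero (constantCoeff_geomTail R), coeff_mk, ha0,
        coeff_map, catalanSeries_coeff, catalan_zero, map_one]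
    · simp [coeff_succ_subst_geomTail, ha]
  rw [mk_a_eq_subst]
  exact one_sub_X_mul_subst_geomTail_of_sq_mul_X_add_one (map_catalanSeries_sq_mul_X_add_one R)

/-- Functional equation for the generating function of edge-rooted weighted
bicolored plane trees by total weight: `(1 - t)·A = (1 - t) + t·A²`. -/
theorem stmt11 (a : ℕ → ℚ) (ha0 : a 0 = 1)
    (ha : ∀ n : ℕ, 1 ≤ n →
      a n = ∑ m ∈ Finset.Icc 1 n,
        (Nat.choose (n - 1) (m - 1) : ℚ) * ((Nat.choose (2 * m) m : ℚ) / (m + 1))) :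
    (1 - PowerSeries.X) * PowerSeries.mk a
      = (1 - PowerSeries.X) + PowerSeries.X * (PowerSeries.mk a) ^ 2 :=
  stmt11_general a ha0 (by simpa only [natCast_catalan_eq_choose_div] using ha)
end

section
/- Define a_0 = 1 and, for n ≥ 1, a_n = Σ_{m=1}^{n} C(n−1, m−1)·Cat_m, where Cat_m = C(2m, m)/(m+1) is the m-th Catalan number. Then for every real number t with 0 < t < 1/5, the series Σ_{n≥0} a_n tⁿ converges and its sum equals (1 − t − √(1 − 6t + 5t²))/(2t). -/
/-!
Put `G(x) = ∑ Cat_n xⁿ`. Write `∑_{n ≥ 1} a_n tⁿ` as a double series and sum over `n` first: the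
identity `∑_n C(n, k) tⁿ⁺¹ = (t / (1 - t))ᵏ⁺¹` turns it into `G(t / (1 - t)) - 1`.

The telescoping identity `∑_{n < N} Cat_n 4⁻ⁿ = 2 - 2 C(2N, N) 4⁻ᴺ` shows that `G` converges
absolutely for `|x| ≤ 1/4`, with `|G(x)| ≤ 2`. Squaring the series gives `G = 1 + x G²`, that is
`(1 - 2xG)² = 1 - 4x`, and the bound on `G` makes `1 - 2xG` nonnegative, so that
`√(1 - 4x) = 1 - 2xG`. Substituting `x = t / (1 - t)`, which satisfies `|x| ≤ 1/4` as soon as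
`|t| ≤ 1/5`, gives the closed form.
-/

open Finset

section Catalan

theorem cast_catalan_eq_choose_div {K : Type*} [DivisionRing K] [CharZero K] (n : ℕ) :
    (catalan n : K) = (Nat.choose (2 * n) n : K) / (n + 1) := by
  rw [eq_div_iff (Nat.cast_add_one_ne_zero n), ← Nat.centralBinom_eq_two_mul_choose,
    ← succ_mul_catalan_eq_centralBinom, mul_comm]
  push_cast
  rfl

theorem centralBinom_succ_eq_mul_catalan (n : ℕ) :
    Nat.centralBinom (n + 1) = 2 * (2 * n + 1) * catalan n := by
  refine Nat.eq_of_mul_eq_mul_left (Nat.add_one_pos n) ?_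
  rw [Nat.succ_mul_centralBinom_succ, ← succ_mul_catalan_eq_centralBinom]
  ring

theorem sum_range_catalan_mul_quarter_pow {K : Type*} [Field K] [CharZero K] (N : ℕ) :
    ∑ n ∈ range N, (catalan n : K) * (1 / 4) ^ n =
      2 - 2 * (Nat.centralBinom N : K) * (1 / 4) ^ N := by
  induction N with
  | zero => simp
  | succ N ih =>
    rw [sum_range_succ, ih, centralBinom_succ_eq_mul_catalan, ← succ_mul_catalan_eq_centralBinom]
    push_cast
    ring

theorem sum_range_catalan_mul_pow_le_two {x : ℝ} (hx₀ : 0 ≤ x) (hx : x ≤ 1 / 4) (N : ℕ) :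
    ∑ n ∈ range N, (catalan n : ℝ) * x ^ n ≤ 2 :=
  calc ∑ n ∈ range N, (catalan n : ℝ) * x ^ n
      ≤ ∑ n ∈ range N, (catalan n : ℝ) * (1 / 4) ^ n := by gcongr
    _ = 2 - 2 * (Nat.centralBinom N : ℝ) * (1 / 4) ^ N := sum_range_catalan_mul_quarter_pow N
    _ ≤ 2 := sub_le_self _ (by positivity)

/-- The generating function `∑ Cat_n xⁿ` of the Catalan numbers, evaluated at `x`; it takes the
junk value `0` where the series is not summable. -/
noncomputable def catalanGF {R : Type*} [Semiring R] [TopologicalSpace R] (x : R) : R :=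
  ∑' n, (catalan n : R) * x ^ n

theorem catalanGF_eq_one_add_mul_sq {R : Type*} [NormedCommRing R] [CompleteSpace R] {x : R}
    (h : Summable fun n ↦ ‖(catalan n : R) * x ^ n‖) :
    catalanGF x = 1 + x * catalanGF x ^ 2 := by
  have coeff_succ (n : ℕ) : (catalan (n + 1) : R) * x ^ (n + 1) =
      x * ∑ p ∈ antidiagonal n, (catalan p.1 * x ^ p.1) * (catalan p.2 * x ^ p.2) := by
    rw [catalan_succ', Nat.cast_sum, sum_mul, mul_sum]
    refine sum_congr rfl fun p hp ↦ ?_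
    rw [← mem_antidiagonal.mp hp]
    push_cast
    ring
  rw [catalanGF, sq, tsum_mul_tsum_eq_tsum_sum_antidiagonal_of_summable_norm h h,
    h.of_norm.tsum_eq_zero_add]
  simp_rw [coeff_succ]
  rw [(summable_norm_sum_mul_antidiagonal_of_summable_norm h h).of_norm.tsum_mul_left]
  simp

section RCLike

variable {𝕜 : Type*} [RCLike 𝕜] {x : 𝕜}

theorem norm_catalan_mul_pow (x : 𝕜) (n : ℕ) :
    ‖(catalan n : 𝕜) * x ^ n‖ = catalan n * ‖x‖ ^ n := by
  rw [norm_mul, norm_pow, RCLike.norm_natCast]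

theorem summable_norm_catalan_mul_pow (hx : ‖x‖ ≤ 1 / 4) :
    Summable fun n ↦ ‖(catalan n : 𝕜) * x ^ n‖ := by
  simp_rw [norm_catalan_mul_pow]
  exact summable_of_sum_range_le (fun n ↦ by positivity)
    (sum_range_catalan_mul_pow_le_two (norm_nonneg x) hx)

theorem norm_catalanGF_le_two (hx : ‖x‖ ≤ 1 / 4) : ‖catalanGF x‖ ≤ 2 := by
  have summable_norm := summable_norm_catalan_mul_pow hx
  refine (norm_tsum_le_tsum_norm summable_norm).trans ?_
  simp_rw [norm_catalan_mul_pow]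
  exact Real.tsum_le_of_sum_range_le (fun n ↦ by positivity)
    (sum_range_catalan_mul_pow_le_two (norm_nonneg x) hx)

end RCLike

theorem sqrt_one_sub_four_mul_eq {x : ℝ} (hx : ‖x‖ ≤ 1 / 4) :
    √(1 - 4 * x) = 1 - 2 * x * catalanGF x := by
  have summable_norm := summable_norm_catalan_mul_pow hx
  have functional_equation := catalanGF_eq_one_add_mul_sq summable_norm
  have norm_mul_le_half : ‖x * catalanGF x‖ ≤ 1 / 4 * 2 :=
    norm_mul_le_of_le hx (norm_catalanGF_le_two hx)
  have root_nonneg : 0 ≤ 1 - 2 * x * catalanGF x := by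
    linarith [Real.le_norm_self (x * catalanGF x)]
  rw [show 1 - 4 * x = (1 - 2 * x * catalanGF x) ^ 2 by
    linear_combination (4 * x) * functional_equation]
  exact Real.sqrt_sq root_nonneg

end Catalan

section BinomialTransform

/-- The binomial transform `n ↦ ∑_{k ≤ n} C(n, k) c_k` of a sequence `c`. -/
def binomialTransform {R : Type*} [Semiring R] (c : ℕ → R) (n : ℕ) : R :=
  ∑ k ∈ range (n + 1), (n.choose k : R) * c k

theorem sum_Icc_choose_mul_eq_binomialTransform {R : Type*} [Semiring R] (c : ℕ → R) (n : ℕ) :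
    ∑ m ∈ Icc 1 (n + 1), (n.choose (m - 1) : R) * c m =
      binomialTransform (fun k ↦ c (k + 1)) n := by
  rw [binomialTransform, range_eq_Ico]
  exact (sum_Ico_add' (fun m ↦ (n.choose (m - 1) : R) * c m) 0 (n + 1) 1).symm

theorem hasSum_choose_mul_eq_binomialTransform {R : Type*} [Semiring R] [TopologicalSpace R]
    (c : ℕ → R) (n : ℕ) :
    HasSum (fun k ↦ (n.choose k : R) * c k) (binomialTransform c n) := by
  refine hasSum_sum_of_ne_finset_zero fun k hk ↦ ?_
  have : n < k := by simpa using hk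
  rw [Nat.choose_eq_zero_of_lt this, Nat.cast_zero, zero_mul]

theorem hasSum_choose_mul_pow_succ {K : Type*} [NormedField K] [HasSummableGeomSeries K]
    {t : K} (ht : ‖t‖ < 1) (k : ℕ) :
    HasSum (fun n ↦ (n.choose k : K) * t ^ (n + 1)) ((t / (1 - t)) ^ (k + 1)) := by
  have shifted := (hasSum_choose_mul_geometric_of_norm_lt_one k ht).mul_left (t ^ (k + 1))
  rw [mul_one_div, ← div_pow] at shifted
  have below_diagonal : ∑ n ∈ range k, (n.choose k : K) * t ^ (n + 1) = 0 :=
    sum_eq_zero fun n hn ↦ by simp [Nat.choose_eq_zero_of_lt (mem_range.mp hn)]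
  rw [← hasSum_nat_add_iff' k, below_diagonal, sub_zero]
  exact shifted.congr_fun fun n ↦ by ring

theorem norm_div_one_sub_le {K : Type*} [NormedField K] {t : K} (ht : ‖t‖ < 1) :
    ‖t / (1 - t)‖ ≤ ‖t‖ / (1 - ‖t‖) := by
  have one_sub_norm_le : 1 - ‖t‖ ≤ ‖1 - t‖ := by simpa using norm_sub_norm_le 1 t
  rw [norm_div]
  gcongr

variable {𝕜 : Type*} [RCLike 𝕜] {c : ℕ → 𝕜} {t : 𝕜}

theorem summable_mul_choose_mul_pow_succ (ht : ‖t‖ < 1)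
    (hc : Summable fun k ↦ ‖c k‖ * (‖t‖ / (1 - ‖t‖)) ^ (k + 1)) :
    Summable fun p : ℕ × ℕ ↦ c p.1 * ((p.2.choose p.1 : 𝕜) * t ^ (p.2 + 1)) := by
  have row (k : ℕ) : HasSum (fun n ↦ ‖c k * ((n.choose k : 𝕜) * t ^ (n + 1))‖)
      (‖c k‖ * (‖t‖ / (1 - ‖t‖)) ^ (k + 1)) := by
    simp_rw [norm_mul, norm_pow, RCLike.norm_natCast]
    have norm_lt : ‖‖t‖‖ < 1 := by rwa [norm_norm]
    exact (hasSum_choose_mul_pow_succ norm_lt k).mul_left ‖c k‖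
  refine Summable.of_norm ((summable_prod_of_nonneg fun p ↦ norm_nonneg _).mpr
    ⟨fun k ↦ (row k).summable, ?_⟩)
  simpa only [(row _).tsum_eq] using hc

theorem hasSum_binomialTransform_mul_pow_succ (ht : ‖t‖ < 1)
    (hc : Summable fun k ↦ ‖c k‖ * (‖t‖ / (1 - ‖t‖)) ^ (k + 1)) :
    HasSum (fun n ↦ binomialTransform c n * t ^ (n + 1))
      (∑' k, c k * (t / (1 - t)) ^ (k + 1)) := by
  have double := (summable_mul_choose_mul_pow_succ ht hc).hasSum
  have sum_rows := double.prod_fiberwise fun k ↦ (hasSum_choose_mul_pow_succ ht k).mul_left (c k)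
  rw [sum_rows.tsum_eq]
  refine ((Equiv.prodComm ℕ ℕ).hasSum_iff.mpr double).prod_fiberwise fun n ↦ ?_
  exact ((hasSum_choose_mul_eq_binomialTransform c n).mul_right (t ^ (n + 1))).congr_fun
    fun k ↦ by simp [mul_left_comm, mul_assoc]

end BinomialTransform

theorem div_one_sub_le_quarter {r : ℝ} (hr : r ≤ 1 / 5) : r / (1 - r) ≤ 1 / 4 := by
  rw [div_le_iff₀ (by linarith)]
  linarith

theorem hasSum_catalanGF_div_one_sub {𝕜 : Type*} [RCLike 𝕜] {a : ℕ → 𝕜} (ha₀ : a 0 = 1)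
    (ha : ∀ n, a (n + 1) = binomialTransform (fun k ↦ (catalan (k + 1) : 𝕜)) n)
    {t : 𝕜} (ht : ‖t‖ ≤ 1 / 5) :
    HasSum (fun n ↦ a n * t ^ n) (catalanGF (t / (1 - t))) := by
  have ht₁ : ‖t‖ < 1 := by linarith
  have hr : ‖t‖ / (1 - ‖t‖) ≤ 1 / 4 := div_one_sub_le_quarter ht
  have hx : ‖t / (1 - t)‖ ≤ 1 / 4 := (norm_div_one_sub_le ht₁).trans hr
  have majorant : Summable fun k ↦
      ‖(catalan (k + 1) : 𝕜)‖ * (‖t‖ / (1 - ‖t‖)) ^ (k + 1) := by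
    have hr' : ‖‖t‖ / (1 - ‖t‖)‖ ≤ 1 / 4 := by
      rwa [Real.norm_of_nonneg (div_nonneg (norm_nonneg t) (sub_nonneg.mpr ht₁.le))]
    simp_rw [RCLike.norm_natCast]
    exact (summable_nat_add_iff 1).mpr (summable_norm_catalan_mul_pow hr').of_norm
  have tail := hasSum_binomialTransform_mul_pow_succ ht₁ majorant
  rw [catalanGF, (summable_norm_catalan_mul_pow hx).of_norm.tsum_eq_zero_add,
    ← hasSum_nat_add_iff' 1]
  simpa [ha₀, ha] using tail

theorem sqrt_one_sub_six_mul_add_eq {t : ℝ} (ht : t < 1) :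
    √(1 - 6 * t + 5 * t ^ 2) = (1 - t) * √(1 - 4 * (t / (1 - t))) := by
  have h : 0 < 1 - t := sub_pos.mpr ht
  rw [show 1 - 6 * t + 5 * t ^ 2 = (1 - t) ^ 2 * (1 - 4 * (t / (1 - t))) by field_simp; ring,
    Real.sqrt_mul (sq_nonneg _), Real.sqrt_sq h.le]

theorem catalanGF_div_one_sub_eq {t : ℝ} (ht₀ : t ≠ 0) (ht : ‖t‖ ≤ 1 / 5) :
    catalanGF (t / (1 - t)) = (1 - t - √(1 - 6 * t + 5 * t ^ 2)) / (2 * t) := by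
  have norm_lt_one : ‖t‖ < 1 := by linarith
  have lt_one : t < 1 := lt_of_abs_lt norm_lt_one
  have hx : ‖t / (1 - t)‖ ≤ 1 / 4 :=
    (norm_div_one_sub_le norm_lt_one).trans (div_one_sub_le_quarter ht)
  have h : 1 - t ≠ 0 := (sub_pos.mpr lt_one).ne'
  rw [sqrt_one_sub_six_mul_add_eq lt_one, sqrt_one_sub_four_mul_eq hx]
  field_simp
  ring

theorem stmt12_general (a : ℕ → ℝ) (ha0 : a 0 = 1)
    (ha : ∀ n : ℕ, 1 ≤ n →
      a n = ∑ m ∈ Finset.Icc 1 n,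
        (Nat.choose (n - 1) (m - 1) : ℝ) * ((Nat.choose (2 * m) m : ℝ) / (m + 1)))
    (t : ℝ) (ht0 : t ≠ 0) (ht : |t| ≤ 1 / 5) :
    HasSum (fun n => a n * t ^ n)
      ((1 - t - Real.sqrt (1 - 6 * t + 5 * t ^ 2)) / (2 * t)) := by
  have ha_succ (n : ℕ) :
      a (n + 1) = binomialTransform (fun k ↦ (catalan (k + 1) : ℝ)) n := by
    rw [ha (n + 1) n.succ_pos, ← sum_Icc_choose_mul_eq_binomialTransform (fun m ↦ (catalan m : ℝ))]
    simp_rw [cast_catalan_eq_choose_div, Nat.add_sub_cancel]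
  rw [← catalanGF_div_one_sub_eq ht0 ht]
  exact hasSum_catalanGF_div_one_sub ha0 ha_succ ht

/-- Closed form of the generating function of edge-rooted weighted bicolored
plane trees: for `0 < t < 1/5`,
`Σ a_n tⁿ = (1 - t - √(1 - 6t + 5t²)) / (2t)`. -/
theorem stmt12 (a : ℕ → ℝ) (ha0 : a 0 = 1)
    (ha : ∀ n : ℕ, 1 ≤ n →
      a n = ∑ m ∈ Finset.Icc 1 n,
        (Nat.choose (n - 1) (m - 1) : ℝ) * ((Nat.choose (2 * m) m : ℝ) / (m + 1)))
    (t : ℝ) (ht0 : 0 < t) (ht : t < 1 / 5) :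
    HasSum (fun n => a n * t ^ n)
      ((1 - t - Real.sqrt (1 - 6 * t + 5 * t ^ 2)) / (2 * t)) :=
  stmt12_general a ha0 ha t ht0.ne' ((abs_of_pos ht0).trans_le ht.le)
end

section
/- Define a_0 = 1 and, for n ≥ 1, a_n = Σ_{m=1}^{n} C(n−1, m−1)·Cat_m, where Cat_m = C(2m, m)/(m+1) is the m-th Catalan number. Then a_n ∼ (1/2)·√(5/π)·5ⁿ·n^{−3/2} as n → ∞; that is, the limit as n → ∞ of a_n · n^{3/2} / 5ⁿ equals (1/2)·√(5/π). -/
/-!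
Catalan numbers are moments of a beta density,
`Cat_{k+1} = (8/π) ∫₀¹ √s √(1-s) (4(1-s))^k ds`, so the binomial theorem turns the weighted sum
`∑ C(n-1, m-1) Cat_m x^m` into `(8x/π) ∫₀¹ √s √(1-s) (1+4x(1-s))^(n-1) ds`.
The base `1+4x(1-s)` is largest at `s = 0`, and rescaling `s = u/n`, as in the Laplace method,
concentrates the integral there, where it becomes a Gamma integral. The weight
`x = 1` gives the growth rate `5`.
-/

open Filter MeasureTheory Real Set
open scoped Nat Topology

section Laplace

theorem tendsto_intervalIntegral_zero_natCast_of_dominated {E : Type*} [NormedAddCommGroup E]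
    [NormedSpace ℝ E] {f : ℕ → ℝ → E} {F : ℝ → E} {bound : ℝ → ℝ}
    (hf : ∀ n, AEStronglyMeasurable (f n) (volume.restrict (Ioi 0)))
    (hbound : ∀ n : ℕ, ∀ u ∈ Ioc (0 : ℝ) n, ‖f n u‖ ≤ bound u)
    (hbound_int : IntegrableOn bound (Ioi 0))
    (hlim : ∀ u > 0, Tendsto (fun n => f n u) atTop (𝓝 (F u))) :
    Tendsto (fun n : ℕ => ∫ u in (0 : ℝ)..n, f n u) atTop (𝓝 (∫ u in Ioi 0, F u)) := by
  have hbound_nonneg : ∀ u > 0, 0 ≤ bound u := fun u hu =>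
    let ⟨n, hn⟩ := exists_nat_ge u
    (norm_nonneg _).trans (hbound n u ⟨hu, hn⟩)
  have hindicator : ∀ n : ℕ, ∫ u in (0 : ℝ)..n, f n u =
      ∫ u in Ioi 0, (Ioc (0 : ℝ) n).indicator (f n) u := fun n => by
    rw [setIntegral_indicator measurableSet_Ioc, inter_eq_right.2 Ioc_subset_Ioi_self,
      intervalIntegral.integral_of_le n.cast_nonneg]
  simp_rw [hindicator]
  refine tendsto_integral_of_dominated_convergence bound
    (fun n => (hf n).indicator measurableSet_Ioc) hbound_int (fun n => ?_) ?_
  · refine ae_restrict_of_forall_mem measurableSet_Ioi fun u hu => ?_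
    by_cases hun : u ∈ Ioc (0 : ℝ) n
    · simpa only [indicator_of_mem hun] using hbound n u hun
    · simpa only [indicator_of_notMem hun, norm_zero] using hbound_nonneg u hu
  · refine ae_restrict_of_forall_mem measurableSet_Ioi fun u hu => (hlim u hu).congr' ?_
    filter_upwards [tendsto_natCast_atTop_atTop.eventually_ge_atTop u] with n hn
    exact (indicator_of_mem (show u ∈ Ioc (0 : ℝ) n from ⟨hu, hn⟩) (f n)).symm

theorem rpow_mul_integral_rpow_sub_one_mul {r : ℝ} (hr : 0 < r) (a : ℝ) (f : ℝ → ℝ) :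
    r ^ a * ∫ s in 0..1, s ^ (a - 1) * f s = ∫ u in 0..r, u ^ (a - 1) * f (u / r) := by
  have hsubst : ∫ u in 0..r, (u / r) ^ (a - 1) * f (u / r) =
      r * ∫ s in 0..1, s ^ (a - 1) * f s := by
    simpa [hr.ne'] using
      intervalIntegral.integral_comp_div (a := 0) (b := r) (fun s => s ^ (a - 1) * f s) hr.ne'
  calc r ^ a * ∫ s in 0..1, s ^ (a - 1) * f s
    _ = r ^ (a - 1) * ∫ u in 0..r, (u / r) ^ (a - 1) * f (u / r) := by
      rw [hsubst, ← mul_assoc, ← rpow_add_one hr.ne', sub_add_cancel]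
    _ = ∫ u in 0..r, u ^ (a - 1) * f (u / r) := by
      rw [← intervalIntegral.integral_const_mul]
      refine intervalIntegral.integral_congr fun u hu => ?_
      rw [uIcc_of_le hr.le] at hu
      have hrpow : r ^ (a - 1) ≠ 0 := (rpow_pos_of_pos hr _).ne'
      simp only [div_rpow hu.1 hr.le]
      field_simp

theorem norm_rpow_mul_one_sub_mul_div_pow_le {b c C u : ℝ} {g : ℝ → ℝ} {n : ℕ} (hc_le : c ≤ 1)
    (hgC : ∀ s ∈ Ioc (0 : ℝ) 1, |g s| ≤ C) (hu : u ∈ Ioc (0 : ℝ) n) :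
    ‖u ^ b * (g (u / n) * (1 - c * (u / n)) ^ n)‖ ≤ C * (u ^ b * exp (-(c * u))) := by
  obtain ⟨hu_pos, hu_le⟩ := hu
  have hn : (0 : ℝ) < n := hu_pos.trans_le hu_le
  have hquot : u / n ∈ Ioc (0 : ℝ) 1 := ⟨by positivity, (div_le_one hn).2 hu_le⟩
  have hC : 0 ≤ C := (abs_nonneg _).trans (hgC _ hquot)
  have hbase : 0 ≤ 1 - c * (u / n) :=
    sub_nonneg.2 ((mul_le_of_le_one_left hquot.1.le hc_le).trans hquot.2)
  have hexp : (1 - c * (u / n)) ^ n ≤ exp (-(c * u)) := by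
    simpa only [mul_div_assoc] using
      one_sub_div_pow_le_exp_neg ((mul_le_of_le_one_left hu_pos.le hc_le).trans hu_le)
  calc ‖u ^ b * (g (u / n) * (1 - c * (u / n)) ^ n)‖
    _ = u ^ b * (|g (u / n)| * (1 - c * (u / n)) ^ n) := by
      rw [norm_mul, norm_mul, norm_eq_abs (g _), norm_of_nonneg (by positivity),
        norm_of_nonneg (by positivity)]
    _ ≤ u ^ b * (C * exp (-(c * u))) := by
      gcongr
      exact hgC _ hquot
    _ = C * (u ^ b * exp (-(c * u))) := mul_left_comm _ _ _

theorem tendsto_rpow_mul_integral_rpow_mul_one_sub_mul_pow {a c C L : ℝ} {g : ℝ → ℝ}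
    (ha : 0 < a) (hc : 0 < c) (hc_le : c ≤ 1) (hg : Measurable g)
    (hgC : ∀ s ∈ Ioc (0 : ℝ) 1, |g s| ≤ C) (hgL : Tendsto g (𝓝[>] 0) (𝓝 L)) :
    Tendsto (fun n : ℕ => (n : ℝ) ^ a * ∫ s in 0..1, s ^ (a - 1) * (g s * (1 - c * s) ^ n))
      atTop (𝓝 (L * (Gamma a / c ^ a))) := by
  have hGamma : L * (Gamma a / c ^ a) = ∫ u in Ioi 0, u ^ (a - 1) * (L * exp (-(c * u))) := by
    simp_rw [mul_left_comm _ L]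
    rw [integral_const_mul, integral_rpow_mul_exp_neg_mul_Ioi ha hc, one_div, inv_rpow hc.le,
      inv_mul_eq_div]
  rw [hGamma]
  have hlaplace := tendsto_intervalIntegral_zero_natCast_of_dominated
    (f := fun n u => u ^ (a - 1) * (g (u / n) * (1 - c * (u / n)) ^ n))
    (F := fun u => u ^ (a - 1) * (L * exp (-(c * u))))
    (bound := fun u => C * (u ^ (a - 1) * exp (-(c * u)))) ?_ ?_ ?_ ?_
  · refine hlaplace.congr' ?_
    filter_upwards [eventually_gt_atTop 0] with n hn
    exact (rpow_mul_integral_rpow_sub_one_mul (Nat.cast_pos.2 hn) a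
      fun s => g s * (1 - c * s) ^ n).symm
  · exact fun n => Measurable.aestronglyMeasurable (by fun_prop)
  · exact fun n u hu => norm_rpow_mul_one_sub_mul_div_pow_le hc_le hgC hu
  · have hint := integrableOn_rpow_mul_exp_neg_mul_rpow (s := a - 1) (by linarith) one_pos hc
    simp only [rpow_one, neg_mul] at hint
    exact hint.const_mul C
  · intro u hu
    have hquot : Tendsto (fun n : ℕ => u / n) atTop (𝓝[>] 0) :=
      tendsto_nhdsWithin_iff.2 ⟨tendsto_const_div_atTop_nhds_zero_nat u,
        (eventually_gt_atTop 0).mono fun n hn => div_pos hu (Nat.cast_pos.2 hn)⟩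
    have hexp : Tendsto (fun n : ℕ => (1 - c * (u / n)) ^ n) atTop (𝓝 (exp (-(c * u)))) := by
      simpa only [neg_div, ← sub_eq_add_neg, mul_div_assoc] using
        tendsto_one_add_div_pow_exp (-(c * u))
    exact ((hgL.comp hquot).mul hexp).const_mul _

end Laplace

section CatalanMoments

theorem cast_catalan_eq_choose_div_s13 (m : ℕ) :
    (catalan m : ℝ) = ((2 * m).choose m : ℝ) / (m + 1) := by
  rw [← Nat.centralBinom_eq_two_mul_choose, ← succ_mul_catalan_eq_centralBinom]
  push_cast
  field_simp

theorem Gamma_three_halves : Gamma (3 / 2) = √π / 2 := by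
  rw [show (3 / 2 : ℝ) = 1 / 2 + 1 by norm_num, Gamma_add_one (by norm_num), Gamma_one_half_eq]
  ring

theorem Gamma_three_halves_div_rpow {c : ℝ} (hc : 0 < c) :
    Gamma (3 / 2) / c ^ (3 / 2 : ℝ) = √(π / c) / (2 * c) := by
  rw [Gamma_three_halves, show (3 / 2 : ℝ) = 1 + 1 / 2 by norm_num, rpow_add hc, rpow_one,
    ← sqrt_eq_rpow, sqrt_div pi_pos.le]
  field_simp

theorem Gamma_natCast_add_half_eq_centralBinom (m : ℕ) :
    Gamma (m + 1 / 2) = √π * m ! * m.centralBinom / 4 ^ m := by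
  induction m with
  | zero => simp [-one_div, Gamma_one_half_eq]
  | succ m ih =>
    have hcentral : ((m : ℝ) + 1) * (m + 1).centralBinom = 2 * (2 * m + 1) * m.centralBinom := by
      exact_mod_cast m.succ_mul_centralBinom_succ
    rw [Nat.cast_succ, add_right_comm, Gamma_add_one (by positivity), ih, Nat.factorial_succ]
    push_cast
    rw [pow_succ]
    field_simp
    linear_combination -2 * hcentral

theorem beta_three_halves_natCast_add_half (m : ℕ) :
    ProbabilityTheory.beta (3 / 2) (m + 1 / 2) = π / 2 * catalan m / 4 ^ m := by
  have hsum : (3 / 2 : ℝ) + (m + 1 / 2) = (m + 1 : ℕ) + 1 := by push_cast; ring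
  rw [ProbabilityTheory.beta, hsum, Gamma_nat_eq_factorial, Gamma_three_halves,
    Gamma_natCast_add_half_eq_centralBinom, ← succ_mul_catalan_eq_centralBinom,
    Nat.factorial_succ]
  push_cast
  field_simp
  rw [sq_sqrt pi_pos.le, mul_comm]

theorem integral_rpow_mul_one_sub_rpow {α β : ℝ} (hα : 0 < α) (hβ : 0 < β) :
    ∫ s in 0..1, s ^ (α - 1) * (1 - s) ^ (β - 1) = ProbabilityTheory.beta α β := by
  have hcomplex : Complex.betaIntegral α β =
      ((∫ s in 0..1, s ^ (α - 1) * (1 - s) ^ (β - 1) : ℝ) : ℂ) := by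
    rw [Complex.betaIntegral, ← intervalIntegral.integral_ofReal]
    refine intervalIntegral.integral_congr fun s hs => ?_
    rw [uIcc_of_le zero_le_one] at hs
    simp [Complex.ofReal_cpow hs.1, Complex.ofReal_cpow (sub_nonneg.2 hs.2)]
  rw [ProbabilityTheory.beta_eq_betaIntegralReal α β hα hβ, hcomplex, Complex.ofReal_re]

theorem catalan_succ_eq_integral (k : ℕ) :
    (catalan (k + 1) : ℝ) = 8 / π * ∫ s in 0..1, √s * √(1 - s) * (4 * (1 - s)) ^ k := by
  have hweight : ∀ s ∈ uIcc (0 : ℝ) 1, √s * √(1 - s) * (4 * (1 - s)) ^ k =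
      4 ^ k * (s ^ ((3 / 2 : ℝ) - 1) * (1 - s) ^ (((k + 1 : ℕ) + 1 / 2 : ℝ) - 1)) := by
    intro s hs
    rw [uIcc_of_le zero_le_one] at hs
    rw [show (3 / 2 : ℝ) - 1 = 1 / 2 by norm_num,
      show ((k + 1 : ℕ) + 1 / 2 : ℝ) - 1 = 1 / 2 + k by push_cast; ring,
      rpow_add_of_nonneg (sub_nonneg.2 hs.2) (by positivity) (by positivity), rpow_natCast,
      ← sqrt_eq_rpow, ← sqrt_eq_rpow, mul_pow]
    ring
  rw [intervalIntegral.integral_congr hweight, intervalIntegral.integral_const_mul,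
    integral_rpow_mul_one_sub_rpow (by norm_num) (by positivity),
    beta_three_halves_natCast_add_half]
  field_simp
  ring

end CatalanMoments

section WeightedSum

theorem sum_choose_mul_catalan_mul_pow_eq_integral (x : ℝ) (n : ℕ) :
    ∑ m ∈ Finset.Icc 1 (n + 1), (n.choose (m - 1) : ℝ) * catalan m * x ^ m =
      8 * x / π * ∫ s in 0..1, √s * √(1 - s) * (1 + 4 * x * (1 - s)) ^ n := by
  have hbinom : ∀ s : ℝ, √s * √(1 - s) * (1 + 4 * x * (1 - s)) ^ n =
      ∑ k ∈ Finset.range (n + 1),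
        n.choose k * x ^ k * (√s * √(1 - s) * (4 * (1 - s)) ^ k) := fun s => by
    rw [show 1 + 4 * x * (1 - s) = x * (4 * (1 - s)) + 1 by ring, add_pow, Finset.mul_sum]
    refine Finset.sum_congr rfl fun k _ => ?_
    rw [mul_pow, one_pow]
    ring
  simp_rw [hbinom]
  rw [intervalIntegral.integral_finsetSum fun k _ =>
    Continuous.intervalIntegrable (by fun_prop) _ _]
  simp_rw [intervalIntegral.integral_const_mul]
  rw [Finset.mul_sum, ← Finset.Ico_add_one_right_eq_Icc, Finset.sum_Ico_eq_sum_range]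
  refine Finset.sum_congr rfl fun k _ => ?_
  rw [add_comm 1 k, Nat.add_sub_cancel, catalan_succ_eq_integral]
  ring

-- Absorbing one factor of the base into the amplitude makes the exponent `n` rather than `n - 1`.
theorem sum_choose_mul_catalan_mul_pow_div_pow_eq_integral {x : ℝ} (hx : 0 < x) {n : ℕ}
    (hn : 1 ≤ n) :
    (∑ m ∈ Finset.Icc 1 n, ((n - 1).choose (m - 1) : ℝ) * catalan m * x ^ m) / (1 + 4 * x) ^ n =
      8 * x / (π * (1 + 4 * x)) * ∫ s in 0..1, s ^ ((3 / 2 : ℝ) - 1) *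
        (√(1 - s) / (1 - 4 * x / (1 + 4 * x) * s) * (1 - 4 * x / (1 + 4 * x) * s) ^ n) := by
  obtain ⟨n, rfl⟩ := Nat.exists_eq_add_of_le' hn
  have hfactor : ∀ s ∈ uIcc (0 : ℝ) 1, √s * √(1 - s) * (1 + 4 * x * (1 - s)) ^ n =
      (1 + 4 * x) ^ n * (s ^ ((3 / 2 : ℝ) - 1) * (√(1 - s) / (1 - 4 * x / (1 + 4 * x) * s) *
        (1 - 4 * x / (1 + 4 * x) * s) ^ (n + 1))) := by
    intro s hs
    rw [uIcc_of_le zero_le_one] at hs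
    have hbase : 1 + 4 * x * (1 - s) = (1 + 4 * x) * (1 - 4 * x / (1 + 4 * x) * s) := by
      field_simp
      ring
    have hpos : 0 < (1 + 4 * x) * (1 - 4 * x / (1 + 4 * x) * s) := by
      rw [← hbase]
      have := sub_nonneg.2 hs.2
      positivity
    rw [hbase, mul_pow, pow_succ' (1 - _), ← mul_assoc (_ / _),
      div_mul_cancel₀ _ (right_ne_zero_of_mul hpos.ne'), sqrt_eq_rpow s,
      show (3 / 2 : ℝ) - 1 = 1 / 2 by norm_num]
    ring
  rw [Nat.add_sub_cancel, sum_choose_mul_catalan_mul_pow_eq_integral,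
    intervalIntegral.integral_congr hfactor, intervalIntegral.integral_const_mul, pow_succ]
  field_simp

theorem abs_sqrt_one_sub_div_one_sub_mul_le {c s : ℝ} (hc : 0 ≤ c) (hc_lt : c < 1)
    (hs : s ∈ Ioc (0 : ℝ) 1) : |√(1 - s) / (1 - c * s)| ≤ 1 / (1 - c) := by
  have hgap : 0 < 1 - c := sub_pos.2 hc_lt
  have hdenom : 1 - c ≤ 1 - c * s := sub_le_sub_left (mul_le_of_le_one_right hc hs.2) 1
  rw [abs_of_nonneg (div_nonneg (sqrt_nonneg _) (hgap.le.trans hdenom))]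
  gcongr
  exact sqrt_le_one.2 (by linarith [hs.1])

theorem stmt13_general {x : ℝ} (hx : 0 < x) :
    Tendsto (fun n : ℕ =>
      (∑ m ∈ Finset.Icc 1 n, ((n - 1).choose (m - 1) : ℝ) * catalan m * x ^ m) *
        (n : ℝ) ^ (3 / 2 : ℝ) / (1 + 4 * x) ^ n)
      atTop (𝓝 (1 / 2 * √((1 + 4 * x) / (π * x)))) := by
  set c : ℝ := 4 * x / (1 + 4 * x)
  have hc : 0 < c := by positivity
  have hc_lt : c < 1 := (div_lt_one (by positivity)).2 (by linarith)
  have hzero : Tendsto (fun s : ℝ => √(1 - s) / (1 - c * s)) (𝓝[>] 0) (𝓝 1) := by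
    have hcont : ContinuousAt (fun s : ℝ => √(1 - s) / (1 - c * s)) 0 :=
      ContinuousAt.div (by fun_prop) (by fun_prop) (by simp)
    simpa using hcont.tendsto.mono_left nhdsWithin_le_nhds
  have hconst : 8 * x / (π * (1 + 4 * x)) * (Gamma (3 / 2) / c ^ (3 / 2 : ℝ)) =
      1 / 2 * √((1 + 4 * x) / (π * x)) := by
    have hsqrt : √(π / c) = π / 2 * √((1 + 4 * x) / (π * x)) := by
      rw [show π / c = (π / 2) ^ 2 * ((1 + 4 * x) / (π * x)) by simp only [c]; field_simp; ring,
        sqrt_mul (by positivity), sqrt_sq (by positivity)]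
    rw [Gamma_three_halves_div_rpow hc, hsqrt]
    simp only [c]
    field_simp
    ring
  have hlaplace := (tendsto_rpow_mul_integral_rpow_mul_one_sub_mul_pow (a := 3 / 2)
    (by norm_num) hc hc_lt.le (by fun_prop)
    (fun _ => abs_sqrt_one_sub_div_one_sub_mul_le hc.le hc_lt) hzero).const_mul
      (8 * x / (π * (1 + 4 * x)))
  rw [one_mul, hconst] at hlaplace
  refine hlaplace.congr' ?_
  filter_upwards [eventually_ge_atTop 1] with n hn
  rw [mul_div_right_comm (∑ _ ∈ _, _), sum_choose_mul_catalan_mul_pow_div_pow_eq_integral hx hn]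
  ring

end WeightedSum

/-- Asymptotics of the number of edge-rooted weighted bicolored plane trees:
`a_n ∼ (1/2)·√(5/π)·5ⁿ·n^{-3/2}`. -/
theorem stmt13 (a : ℕ → ℝ) (ha0 : a 0 = 1)
    (ha : ∀ n : ℕ, 1 ≤ n →
      a n = ∑ m ∈ Finset.Icc 1 n,
        (Nat.choose (n - 1) (m - 1) : ℝ) * ((Nat.choose (2 * m) m : ℝ) / (m + 1))) :
    Filter.Tendsto (fun n : ℕ => a n * (n : ℝ) ^ ((3 : ℝ) / 2) / 5 ^ n)
      Filter.atTop (nhds ((1 / 2) * Real.sqrt (5 / Real.pi))) := by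
  have hweight_one := stmt13_general one_pos
  norm_num only [one_pow, mul_one] at hweight_one
  refine hweight_one.congr' ?_
  filter_upwards [eventually_ge_atTop 1] with n hn
  simp_rw [ha n hn, cast_catalan_eq_choose_div_s13]
end
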